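/- arXiv:2109.08707 — 6 statements merged into one kernel-verified Lean document; each statement's English description precedes it below -/
import Mathlib

section
/- Let N ≥ 2 be an integer and let k > 0, α > 0, R > 0 be real numbers. There exists a constant C > 0, depending only on k, α, N and R, such that for every r with 0 < r < R, ∫_{E_B^r} exp(−‖y‖²/2 + R‖y‖) · w_B(y,α)^{2k} dy ≤ C · r^{2k·min(1,α)+1}. -/
/-! Near a wall of the chamber at distance at most `r`, the weight `w_B` has one small factor: `y_0 ^ α`
is at most `r ^ α` near the wall `y_0 = 0`, and `y_j ^ 2 - y_i ^ 2 = (y_j - y_i) * (y_j + y_i)` is at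
most `2 * r * ‖y‖` near `y_i = y_j`. All other factors grow at most exponentially in `‖y‖`
(`wB_le_near_wall`). Since `r < R`, both gains are `O(r ^ min 1 α)`, so on the whole region of
integration the integrand is at most a constant times `r ^ (2 * k * min 1 α) * exp (-‖y‖ ^ 2 / 4)`.

The last factor `r` comes from the volume: the region is covered by finitely many strips, in each of
which one coordinate lies in an interval of length `r` once the others are fixed, and by Fubini the
Gaussian mass of such a strip is `O(r)` (`lintegral_strip_le`).
-/

open MeasureTheory Real Finset

noncomputable section

/-- The type-B weight `w_B(y,α) = ∏_l y_l^α · ∏_{i<j} (y_j² - y_i²)`. -/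
def wB {N : ℕ} (α : ℝ) (y : EuclideanSpace ℝ (Fin N)) : ℝ :=
  (∏ l : Fin N, y l ^ α) * ∏ i : Fin N, ∏ j ∈ Finset.Ioi i, (y j ^ 2 - y i ^ 2)

lemma prod_le_pow_card_of_nonneg {ι : Type*} {s : Finset ι} {f : ι → ℝ} {b : ℝ}
    (h0 : ∀ i ∈ s, 0 ≤ f i) (hfb : ∀ i ∈ s, f i ≤ b) : ∏ i ∈ s, f i ≤ b ^ s.card :=
  (prod_le_prod h0 hfb).trans_eq (by rw [prod_const])

/-- One exceptionally small factor `f i₀ ≤ c * b` makes the whole product small. -/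
lemma prod_le_of_one_small {ι : Type*} [DecidableEq ι] {s : Finset ι} {f : ι → ℝ} {b c : ℝ}
    {i₀ : ι} (hi : i₀ ∈ s) (hb : 0 ≤ b) (hc : 0 ≤ c) (h0 : ∀ i ∈ s, 0 ≤ f i)
    (hfb : ∀ i ∈ s, f i ≤ b) (hfc : f i₀ ≤ c * b) : ∏ i ∈ s, f i ≤ c * b ^ s.card := by
  have h1 : ∏ i ∈ s.erase i₀, f i ≤ b ^ (s.erase i₀).card :=
    prod_le_pow_card_of_nonneg (fun i h => h0 i (mem_of_mem_erase h))
      fun i h => hfb i (mem_of_mem_erase h)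
  rw [← mul_prod_erase s f hi, ← card_erase_add_one hi, pow_succ']
  calc f i₀ * ∏ i ∈ s.erase i₀, f i ≤ c * b * b ^ (s.erase i₀).card :=
        mul_le_mul hfc h1 (prod_nonneg fun i h => h0 i (mem_of_mem_erase h)) (by positivity)
    _ = c * (b * b ^ (s.erase i₀).card) := mul_assoc _ _ _

/-- Fubini estimate: a strip in which one coordinate `y j` is confined to an interval of length `r`,
whose endpoint depends measurably on the other coordinates, has Gaussian mass `O(r)`, uniformly in
the choice of the strip. -/
lemma lintegral_strip_le (n : ℕ) : ∃ D : ℝ, 0 ≤ D ∧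
    ∀ (j : Fin (n + 1)) (a : (Fin n → ℝ) → ℝ) (r : ℝ), Measurable a → 0 < r →
      ∫⁻ y in {y : EuclideanSpace ℝ (Fin (n + 1)) |
          a (fun l => y (j.succAbove l)) ≤ y j ∧ y j ≤ a (fun l => y (j.succAbove l)) + r},
        ENNReal.ofReal (Real.exp (-‖y‖ ^ 2 / 4)) ≤ ENNReal.ofReal (D * r) := by
  let h : (Fin n → ℝ) → ℝ := fun z => ∏ l, Real.exp (-(1 / 4) * z l ^ 2)
  have hint : Integrable h := Integrable.fintype_prod fun _ => integrable_exp_neg_mul_sq (by norm_num)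
  have h0 : ∀ z, 0 ≤ h z := fun z => prod_nonneg fun _ _ => (Real.exp_pos _).le
  have hm : Measurable h := by fun_prop
  refine ⟨∫ z, h z, integral_nonneg h0, fun j a r ha hr => ?_⟩
  let S : Set (ℝ × (Fin n → ℝ)) := {p | a p.2 ≤ p.1 ∧ p.1 ≤ a p.2 + r}
  have hS : MeasurableSet S :=
    (measurableSet_le (f := fun p : ℝ × (Fin n → ℝ) => a p.2) (g := fun p => p.1)
      (by fun_prop) (by fun_prop)).inter
    (measurableSet_le (f := fun p : ℝ × (Fin n → ℝ) => p.1) (g := fun p => a p.2 + r)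
      (by fun_prop) (by fun_prop))
  have hmp := (volume_preserving_piFinSuccAbove (fun _ : Fin (n + 1) => ℝ) j).comp
    (PiLp.volume_preserving_ofLp (Fin (n + 1)))
  have hF : Measurable fun p : ℝ × (Fin n → ℝ) => ENNReal.ofReal (h p.2) := by fun_prop
  have key := hmp.setLIntegral_comp_preimage hS hF
  calc _ ≤ ∫⁻ y in {y : EuclideanSpace ℝ (Fin (n + 1)) |
          a (fun l => y (j.succAbove l)) ≤ y j ∧ y j ≤ a (fun l => y (j.succAbove l)) + r},
          ENNReal.ofReal (h fun l => y (j.succAbove l)) := by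
        refine lintegral_mono fun y => ENNReal.ofReal_le_ofReal ?_
        simp only [h]
        rw [← Real.exp_sum, Real.exp_le_exp, ← Finset.mul_sum, EuclideanSpace.real_norm_sq_eq,
          Fin.sum_univ_succAbove _ j]
        nlinarith [sq_nonneg (y j)]
    _ = ∫⁻ p in S, ENNReal.ofReal (h p.2) := key
    _ = ∫⁻ p, S.indicator (fun p => ENNReal.ofReal (h p.2)) p := (lintegral_indicator hS _).symm
    _ = ∫⁻ z, ∫⁻ t, S.indicator (fun p => ENNReal.ofReal (h p.2)) (t, z) := by
        rw [Measure.volume_eq_prod]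
        exact lintegral_prod_symm' _ (hF.indicator hS)
    _ = ∫⁻ z, ENNReal.ofReal (h z) * ENNReal.ofReal r := by
        congr 1; ext z
        have : (fun t => S.indicator (fun p => ENNReal.ofReal (h p.2)) (t, z))
            = (Set.Icc (a z) (a z + r)).indicator fun _ => ENNReal.ofReal (h z) := by
          ext t; simp only [Set.indicator, S, Set.mem_ofPred_eq, Set.mem_Icc]
        rw [this, lintegral_indicator_const measurableSet_Icc, Real.volume_Icc]
        simp
    _ = ENNReal.ofReal ((∫ z, h z) * r) := by
        rw [lintegral_mul_const _ (by fun_prop), ENNReal.ofReal_mul (integral_nonneg h0),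
          ofReal_integral_eq_lintegral_ofReal hint (Filter.Eventually.of_forall h0)]

/-- On the chamber, `w_B` grows at most exponentially, with a gain of `r ^ α` where some coordinate
`y i₀` is below `r`, and of `r` where two coordinates are within `r` of each other: in each case one
factor of the product is small and the others are bounded by exponentials of `‖y‖`. -/
lemma wB_le_near_wall {N : ℕ} {α r : ℝ} (hα : 0 < α) (hr : 0 < r) (i₀ : Fin N)
    (y : EuclideanSpace ℝ (Fin N)) (hpos : ∀ i, 0 < y i) (hy : StrictMono y) :
    0 ≤ wB α y ∧
    (y i₀ < r → wB α y ≤ r ^ α * Real.exp ((α * N + 2 * N * N) * ‖y‖)) ∧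
    (∀ i j : Fin N, i < j → y j - y i ≤ r →
      wB α y ≤ r * Real.exp ((α * N + 2 * N * N) * ‖y‖)) := by
  set T := ‖y‖
  have hT : 0 ≤ T := norm_nonneg y
  have hyT : ∀ i, y i ≤ T := fun i => (le_abs_self _).trans (PiLp.norm_apply_le y i)
  have hTexp : T ≤ Real.exp T := by linarith [Real.add_one_le_exp T]
  have hp0 : ∀ i ∈ (univ : Finset (Fin N)), 0 ≤ y i ^ α := fun i _ => rpow_nonneg (hpos i).le _
  have hp1 : ∀ i ∈ (univ : Finset (Fin N)), y i ^ α ≤ Real.exp (α * T) := fun i _ => by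
    rw [mul_comm, Real.exp_mul]
    exact rpow_le_rpow (hpos i).le ((hyT i).trans hTexp) hα.le
  have hq0 : ∀ i, ∀ j ∈ Finset.Ioi i, 0 ≤ y j ^ 2 - y i ^ 2 := fun i j hj => by
    have := hy (Finset.mem_Ioi.1 hj)
    nlinarith [hpos i, hpos j]
  have hq1 : ∀ i, ∀ j ∈ Finset.Ioi i, y j ^ 2 - y i ^ 2 ≤ Real.exp (2 * T) := fun i j hj => by
    have : Real.exp (2 * T) = Real.exp T ^ 2 := by rw [← Real.exp_nat_mul]; norm_cast
    have : y j ^ 2 ≤ Real.exp T ^ 2 := pow_le_pow_left₀ (hpos j).le ((hyT j).trans hTexp) 2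
    nlinarith [sq_nonneg (y i)]
  have he1 : 1 ≤ Real.exp (2 * T) := Real.one_le_exp (by positivity)
  have hcard : ∀ i : Fin N, (Finset.Ioi i).card ≤ N := fun i =>
    (Finset.card_le_univ _).trans_eq (Fintype.card_fin N)
  have hpow : ∀ i : Fin N, Real.exp (2 * T) ^ (Finset.Ioi i).card ≤ Real.exp (2 * T) ^ N :=
    fun i => pow_le_pow_right₀ he1 (hcard i)
  have hP0 : 0 ≤ ∏ l, y l ^ α := prod_nonneg hp0
  have hI0 : ∀ i ∈ (univ : Finset (Fin N)), 0 ≤ ∏ j ∈ Finset.Ioi i, (y j ^ 2 - y i ^ 2) :=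
    fun i _ => prod_nonneg (hq0 i)
  have hI1 : ∀ i ∈ (univ : Finset (Fin N)),
      ∏ j ∈ Finset.Ioi i, (y j ^ 2 - y i ^ 2) ≤ Real.exp (2 * T) ^ N := fun i _ =>
    (prod_le_pow_card_of_nonneg (hq0 i) (hq1 i)).trans (hpow i)
  have hQ0 := prod_nonneg hI0
  have hP1 : ∏ l, y l ^ α ≤ Real.exp (α * T) ^ N := by
    simpa using prod_le_pow_card_of_nonneg hp0 hp1
  have hQ1 : ∏ i : Fin N, ∏ j ∈ Finset.Ioi i, (y j ^ 2 - y i ^ 2) ≤ (Real.exp (2 * T) ^ N) ^ N := by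
    simpa using prod_le_pow_card_of_nonneg hI0 hI1
  have hexp : Real.exp ((α * N + 2 * N * N) * T)
      = Real.exp (α * T) ^ N * (Real.exp (2 * T) ^ N) ^ N := by
    rw [← pow_mul, ← Real.exp_nat_mul, ← Real.exp_nat_mul, ← Real.exp_add]
    push_cast; ring_nf
  refine ⟨mul_nonneg hP0 hQ0, fun h => ?_, fun i j hij h => ?_⟩
  · have h1 : ∏ l, y l ^ α ≤ r ^ α * Real.exp (α * T) ^ N := by
      have := prod_le_of_one_small (c := r ^ α) (mem_univ i₀) (Real.exp_pos (α * T)).le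
        (rpow_nonneg hr.le α) hp0 hp1
        ((rpow_le_rpow (hpos i₀).le h.le hα.le).trans
          (le_mul_of_one_le_right (rpow_nonneg hr.le α) (Real.one_le_exp (by positivity))))
      simpa using this
    rw [hexp, ← mul_assoc]
    exact mul_le_mul h1 hQ1 hQ0 (by positivity)
  · have h2T : 2 * T ≤ Real.exp (2 * T) := by linarith [Real.add_one_le_exp (2 * T)]
    have hf : y j ^ 2 - y i ^ 2 ≤ r * Real.exp (2 * T) := by
      have : y j ^ 2 - y i ^ 2 = (y j - y i) * (y j + y i) := by ring
      rw [this]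
      exact mul_le_mul h (by linarith [hyT i, hyT j]) (by linarith [hpos i, hpos j]) hr.le
    have h1 : ∏ l ∈ Finset.Ioi i, (y l ^ 2 - y i ^ 2) ≤ r * Real.exp (2 * T) ^ N :=
      (prod_le_of_one_small (Finset.mem_Ioi.2 hij) (Real.exp_pos _).le hr.le (hq0 i) (hq1 i)
        hf).trans (mul_le_mul_of_nonneg_left (hpow i) hr.le)
    have h2 := prod_le_of_one_small (mem_univ i) (by positivity) hr.le hI0 hI1 h1
    rw [Finset.card_univ, Fintype.card_fin] at h2
    rw [hexp, mul_left_comm]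
    exact mul_le_mul hP1 h2 hQ0 (by positivity)

theorem stmt2 (N : ℕ) (hN : 2 ≤ N) (k α R : ℝ) (hk : 0 < k) (hα : 0 < α) (hR : 0 < R) :
    ∃ C : ℝ, 0 < C ∧ ∀ r : ℝ, 0 < r → r < R →
      (∫⁻ y in {y : EuclideanSpace ℝ (Fin N) | (0 < y ⟨0, by omega⟩ ∧ StrictMono y) ∧
          (y ⟨0, by omega⟩ < r ∨ ∃ i j : Fin N, (j : ℕ) = (i : ℕ) + 1 ∧ y j - y i ≤ r)},
        ENNReal.ofReal (Real.exp (-‖y‖ ^ 2 / 2 + R * ‖y‖) * wB α y ^ (2 * k)))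
        ≤ ENNReal.ofReal (C * r ^ (2 * k * min 1 α + 1)) := by
  obtain ⟨n, rfl⟩ : ∃ n, N = n + 1 := ⟨N - 1, by omega⟩
  obtain ⟨D, hD, hstrip⟩ := lintegral_strip_le n
  set m := min 1 α
  have hm1 : m ≤ 1 := min_le_left _ _
  have hmα : m ≤ α := min_le_right _ _
  set M : ℝ := α * ((n + 1 : ℕ) : ℝ) + 2 * ((n + 1 : ℕ) : ℝ) * ((n + 1 : ℕ) : ℝ)
  set L : ℝ := R ^ (α - m) + R ^ (1 - m)
  have hL1 : R ^ (α - m) ≤ L := le_add_of_nonneg_right (by positivity)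
  have hL2 : R ^ (1 - m) ≤ L := le_add_of_nonneg_left (by positivity)
  have hL : 0 < L := by positivity
  set Q : ℝ := L ^ (2 * k) * Real.exp ((R + 2 * k * M) ^ 2)
  have hQ : 0 < Q := by positivity
  set A : ℝ := D * (1 + (n + 1) * (n + 1))
  have hA : 0 ≤ A := by positivity
  refine ⟨Q * (A + 1), by positivity, fun r hr hrR => ?_⟩
  set S := {y : EuclideanSpace ℝ (Fin (n + 1)) | (0 < y ⟨0, by omega⟩ ∧ StrictMono y) ∧
          (y ⟨0, by omega⟩ < r ∨ ∃ i j : Fin (n + 1), (j : ℕ) = (i : ℕ) + 1 ∧ y j - y i ≤ r)}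
  have hpow : ∀ β, m ≤ β → R ^ (β - m) ≤ L → r ^ β ≤ r ^ m * L := fun β hβ hβL => by
    calc r ^ β = r ^ m * r ^ (β - m) := by rw [← rpow_add hr]; ring_nf
      _ ≤ r ^ m * R ^ (β - m) := by
        gcongr
      _ ≤ r ^ m * L := by gcongr
  -- On the whole region the weight gains `r ^ m`, and the Gaussian absorbs the exponential growth.
  have hpt : ∀ y ∈ S, ENNReal.ofReal (Real.exp (-‖y‖ ^ 2 / 2 + R * ‖y‖) * wB α y ^ (2 * k)) ≤
      ENNReal.ofReal (Q * r ^ (2 * k * m)) * ENNReal.ofReal (Real.exp (-‖y‖ ^ 2 / 4)) := by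
    rintro y ⟨⟨hy0, hy⟩, hor⟩
    have hpos : ∀ i, 0 < y i := fun i => hy0.trans_le (hy.monotone (Fin.zero_le i))
    obtain ⟨hw0, hw1, hw2⟩ := wB_le_near_wall hα hr ⟨0, by omega⟩ y hpos hy
    have hw : wB α y ≤ r ^ m * L * Real.exp (M * ‖y‖) := by
      rcases hor with h | ⟨i, j, hij, h⟩
      · exact (hw1 h).trans (mul_le_mul_of_nonneg_right (hpow α hmα hL1) (Real.exp_pos _).le)
      · refine (hw2 i j (by rw [Fin.lt_def]; omega) h).trans
          (mul_le_mul_of_nonneg_right ?_ (Real.exp_pos _).le)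
        simpa using hpow 1 hm1 hL2
    rw [← ENNReal.ofReal_mul (by positivity)]
    refine ENNReal.ofReal_le_ofReal ?_
    calc Real.exp (-‖y‖ ^ 2 / 2 + R * ‖y‖) * wB α y ^ (2 * k)
        ≤ Real.exp (-‖y‖ ^ 2 / 2 + R * ‖y‖) * (r ^ m * L * Real.exp (M * ‖y‖)) ^ (2 * k) := by
          gcongr
      _ = r ^ (2 * k * m) * L ^ (2 * k) *
          Real.exp (-‖y‖ ^ 2 / 2 + R * ‖y‖ + M * ‖y‖ * (2 * k)) := by
          rw [mul_rpow (by positivity) (by positivity), mul_rpow (by positivity) (by positivity),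
            ← Real.exp_mul, ← rpow_mul hr.le, Real.exp_add _ (M * ‖y‖ * (2 * k)), mul_comm m]
          ring
      _ ≤ r ^ (2 * k * m) * L ^ (2 * k) *
          Real.exp ((R + 2 * k * M) ^ 2 + -‖y‖ ^ 2 / 4) := by
          refine mul_le_mul_of_nonneg_left (Real.exp_le_exp.2 ?_) (by positivity)
          nlinarith [sq_nonneg (‖y‖ / 2 - (R + 2 * k * M))]
      _ = Q * r ^ (2 * k * m) * Real.exp (-‖y‖ ^ 2 / 4) := by
          rw [Real.exp_add]; ring
  let g : EuclideanSpace ℝ (Fin (n + 1)) → ENNReal :=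
    fun y => ENNReal.ofReal (Real.exp (-‖y‖ ^ 2 / 4))
  have hg : Measurable g := by fun_prop
  let B : Fin (n + 1) × Fin (n + 1) → Set (EuclideanSpace ℝ (Fin (n + 1))) :=
    fun p => {y | p.1 ≠ p.2 ∧ y p.1 ≤ y p.2 ∧ y p.2 ≤ y p.1 + r}
  let W : Set (EuclideanSpace ℝ (Fin (n + 1))) := {y | 0 ≤ y 0 ∧ y 0 ≤ 0 + r}
  have hW : ∫⁻ y in W, g y ≤ ENNReal.ofReal (D * r) :=
    hstrip 0 (fun _ => 0) r measurable_const hr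
  have hB : ∀ p, ∫⁻ y in B p, g y ≤ ENNReal.ofReal (D * r) := by
    rintro ⟨i, j⟩
    by_cases hij : i = j
    · simp [B, hij]
    · obtain ⟨l, hl⟩ := Fin.exists_succAbove_eq hij
      refine (lintegral_mono_set ?_).trans
        (hstrip j (fun z => z l) r (measurable_pi_apply l) hr)
      rintro y ⟨-, h1, h2⟩
      simp only [Set.mem_ofPred_eq, hl]
      exact ⟨h1, h2⟩
  have hSsub : S ⊆ W ∪ ⋃ p, B p := by
    rintro y ⟨⟨hy0, hy⟩, h | ⟨i, j, hij, h⟩⟩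
    · exact Or.inl ⟨hy0.le, (zero_add r).symm ▸ h.le⟩
    · have hlt : i < j := by rw [Fin.lt_def]; omega
      exact Or.inr (Set.mem_iUnion.2 ⟨(i, j), hlt.ne, (hy hlt).le, by simp only; linarith⟩)
  have hgS : ∫⁻ y in S, g y ≤ ENNReal.ofReal (A * r) := by
    calc ∫⁻ y in S, g y ≤ ∫⁻ y in W ∪ ⋃ p, B p, g y := lintegral_mono_set hSsub
      _ ≤ (∫⁻ y in W, g y) + ∑' p, ∫⁻ y in B p, g y :=
        (lintegral_union_le _ _ _).trans (add_le_add le_rfl (lintegral_iUnion_le _ _))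
      _ ≤ ENNReal.ofReal (D * r) + ∑ p : Fin (n + 1) × Fin (n + 1), ENNReal.ofReal (D * r) := by
        rw [tsum_fintype]
        exact add_le_add hW (sum_le_sum fun p _ => hB p)
      _ = ENNReal.ofReal (A * r) := by
        have h0 : 0 ≤ D * r := by positivity
        rw [← ENNReal.ofReal_sum_of_nonneg fun _ _ => h0,
          ← ENNReal.ofReal_add h0 (sum_nonneg fun _ _ => h0)]
        congr 1
        simp only [sum_const, card_univ, Fintype.card_prod, Fintype.card_fin, nsmul_eq_mul, A]
        push_cast; ring
  calc _ ≤ ∫⁻ y in S, ENNReal.ofReal (Q * r ^ (2 * k * m)) * g y :=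
        setLIntegral_mono (hg.const_mul _) hpt
    _ = ENNReal.ofReal (Q * r ^ (2 * k * m)) * ∫⁻ y in S, g y := lintegral_const_mul _ hg
    _ ≤ ENNReal.ofReal (Q * r ^ (2 * k * m)) * ENNReal.ofReal (A * r) := by gcongr
    _ ≤ ENNReal.ofReal (Q * (A + 1) * r ^ (2 * k * m + 1)) := by
        rw [← ENNReal.ofReal_mul (by positivity)]
        refine ENNReal.ofReal_le_ofReal ?_
        rw [rpow_add hr, rpow_one]
        have : 0 ≤ Q * (r ^ (2 * k * m) * r) := by positivity
        linarith
end
end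

section
/- Let N ≥ 2 be an integer and let k > 0, α > 0, R > 0 be real numbers. There exists a constant C > 0, depending only on k, α, N and R, such that for every r with 0 < r < R, ∫_{E_B^r} exp(−(‖y‖+R)²/2) · w_B(y,α)^{2k} dy ≥ C · r^{2k·min(1,α)+1}. -/
/-!
The integral is bounded below by its restriction to one explicit set `S` of volume `r / 2` on which
the coordinates stay in a fixed bounded range (so the exponential factor is bounded below) and on
which one factor of `wB` is of order `r ^ α` or `r`, all the others being at least `1`.

* If `α ≤ 1`, the small factor is `y₀ ^ α`: take `y₀ ∈ (r/2, r)` and every other coordinate in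
  an interval of length one, these intervals being far apart from each other.
* If `1 ≤ α`, the small factor is `y₁² - y₀²`: take `y₁ - y₀ ∈ (r/2, r)` and every coordinate other
  than `y₁` in an interval of length one. This `S` is the preimage of a box under the shear
  `y₁ ↦ y₁ - y₀`, which preserves volume.

In both cases `wB α y ≥ (r / 2) ^ min 1 α` on `S`; raising this to the power `2 * k` and multiplying
by the volume `r / 2` gives the exponent `2 * k * min 1 α + 1` (`lower_bound_of_subset`).
-/

open MeasureTheory Real Finset

noncomputable section

/-- A finite product all of whose factors are at least `1`, except one which is at least `c ≥ 0`, is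
at least `c`. -/
lemma le_prod_of_one_le {ι : Type*} [DecidableEq ι] (s : Finset ι) (f : ι → ℝ) (p : ι) (hp : p ∈ s)
    (c : ℝ) (hc : 0 ≤ c) (hfp : c ≤ f p) (hf : ∀ i ∈ s, i ≠ p → 1 ≤ f i) : c ≤ ∏ i ∈ s, f i := by
  rw [← Finset.mul_prod_erase s f hp]
  have h1 : (1 : ℝ) ≤ ∏ i ∈ s.erase p, f i := by
    have := Finset.prod_le_prod (s := s.erase p) (f := fun _ => (1 : ℝ)) (g := f)
      (fun _ _ => zero_le_one) (fun i hi => hf i (Finset.mem_of_mem_erase hi)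
        (Finset.ne_of_mem_erase hi))
    simpa using this
  nlinarith

lemma one_le_prod_of_one_le {ι : Type*} (s : Finset ι) (f : ι → ℝ)
    (hf : ∀ i ∈ s, 1 ≤ f i) : 1 ≤ ∏ i ∈ s, f i := by
  have := Finset.prod_le_prod (s := s) (f := fun _ => (1 : ℝ)) (g := f)
      (fun _ _ => zero_le_one) hf
  simpa using this

/-- Case `α ≤ 1`: only the coordinate `p` is small. -/
lemma le_wB_of_coord {N : ℕ} (α c : ℝ) (hα : 0 < α) (hc : 0 < c) (y : EuclideanSpace ℝ (Fin N))
    (p : Fin N) (hp : c ≤ y p) (h1 : ∀ l, l ≠ p → 1 ≤ y l)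
    (h2 : ∀ i j, i < j → 1 ≤ y j ^ 2 - y i ^ 2) : c ^ α ≤ wB α y := by
  have ha : c ^ α ≤ ∏ l : Fin N, y l ^ α :=
    le_prod_of_one_le _ _ p (Finset.mem_univ _) _ (by positivity)
      (Real.rpow_le_rpow hc.le hp hα.le) (fun i _ hi => Real.one_le_rpow (h1 i hi) hα.le)
  have hb : 1 ≤ ∏ i : Fin N, ∏ j ∈ Finset.Ioi i, (y j ^ 2 - y i ^ 2) :=
    one_le_prod_of_one_le _ _ fun i _ => one_le_prod_of_one_le _ _ fun j hj =>
      h2 i j (Finset.mem_Ioi.1 hj)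
  have hc' : 0 < c ^ α := by positivity
  unfold wB
  nlinarith

/-- Case `1 ≤ α`: only the difference of the coordinates `p` and `q` is small. -/
lemma le_wB_of_diff {N : ℕ} (α c : ℝ) (hα : 0 < α) (hc : 0 < c) (y : EuclideanSpace ℝ (Fin N))
    (p q : Fin N) (hpq : p < q) (hp : c ≤ y q ^ 2 - y p ^ 2) (h1 : ∀ l, 1 ≤ y l)
    (h2 : ∀ i j, i < j → ¬ (i = p ∧ j = q) → 1 ≤ y j ^ 2 - y i ^ 2) : c ≤ wB α y := by
  have ha : 1 ≤ ∏ l : Fin N, y l ^ α :=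
    one_le_prod_of_one_le _ _ fun i _ => Real.one_le_rpow (h1 i) hα.le
  have hb : c ≤ ∏ i : Fin N, ∏ j ∈ Finset.Ioi i, (y j ^ 2 - y i ^ 2) := by
    refine le_prod_of_one_le _ _ p (Finset.mem_univ _) _ hc.le ?_ ?_
    · exact le_prod_of_one_le _ _ q (Finset.mem_Ioi.2 hpq) _ hc.le hp
        (fun j hj hjq => h2 p j (Finset.mem_Ioi.1 hj) (fun h => hjq h.2))
    · intro i _ hi
      exact one_le_prod_of_one_le _ _ fun j hj =>
        h2 i j (Finset.mem_Ioi.1 hj) (fun h => hi h.1)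
  unfold wB
  nlinarith

/-- The open box in `ℝ^N` with sides `(r/2, r)` in direction `p` and `(L l, L l + 1)` in every other
direction `l`. -/
def slab {N : ℕ} (r : ℝ) (p : Fin N) (L : Fin N → ℝ) : Set (Fin N → ℝ) :=
  Set.pi Set.univ fun l => Set.Ioo (if l = p then r / 2 else L l) (if l = p then r else L l + 1)

lemma measurableSet_slab {N : ℕ} (r : ℝ) (p : Fin N) (L : Fin N → ℝ) :
    MeasurableSet (slab r p L) :=
  MeasurableSet.univ_pi fun _ => measurableSet_Ioo

lemma volume_slab {N : ℕ} (r : ℝ) (p : Fin N) (L : Fin N → ℝ) :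
    volume (slab r p L) = ENNReal.ofReal (r / 2) := by
  rw [slab, Real.volume_pi_Ioo, Finset.prod_eq_single p]
  · simp only [if_true]
    congr 1
    ring
  · intro l _ hl
    simp [hl]
  · simp

/-- On a set of volume `r / 2` where the coordinates lie in `(0, M]` and `wB α y ≥ (r / 2) ^ q`, the
integrand is at least a constant times `r ^ (2 * k * q)`, so the integral is at least a constant times
`r ^ (2 * k * q + 1)`. -/
lemma lower_bound_of_subset {N : ℕ} (k α R q M r : ℝ) (hk : 0 < k) (hR : 0 < R) (hr : 0 < r)
    (A S : Set (EuclideanSpace ℝ (Fin N))) (hSA : S ⊆ A) (hS : MeasurableSet S)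
    (hvol : volume S = ENNReal.ofReal (r / 2)) (hM : ∀ y ∈ S, ∀ l, 0 < y l ∧ y l ≤ M)
    (hw : ∀ y ∈ S, (r / 2) ^ q ≤ wB α y) :
    ENNReal.ofReal (Real.exp (-(√(N * M ^ 2) + R) ^ 2 / 2) * (1 / 2) ^ (2 * k * q + 1)
        * r ^ (2 * k * q + 1)) ≤
      ∫⁻ y in A, ENNReal.ofReal (Real.exp (-(‖y‖ + R) ^ 2 / 2) * wB α y ^ (2 * k)) := by
  refine le_trans ?_ (lintegral_mono_set hSA)
  have hpt : ∀ y ∈ S, ENNReal.ofReal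
      (Real.exp (-(√(N * M ^ 2) + R) ^ 2 / 2) * (r / 2) ^ (2 * k * q)) ≤
      ENNReal.ofReal (Real.exp (-(‖y‖ + R) ^ 2 / 2) * wB α y ^ (2 * k)) := by
    intro y hy
    apply ENNReal.ofReal_le_ofReal
    have hn : ‖y‖ ≤ √(N * M ^ 2) := by
      rw [EuclideanSpace.norm_eq]
      apply Real.sqrt_le_sqrt
      calc ∑ i, ‖y i‖ ^ 2 ≤ ∑ i : Fin N, M ^ 2 := by
            apply Finset.sum_le_sum
            intro i _
            have := hM y hy i
            rw [Real.norm_eq_abs, sq_abs]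
            nlinarith
        _ = N * M ^ 2 := by simp
    have he : Real.exp (-(√(N * M ^ 2) + R) ^ 2 / 2) ≤ Real.exp (-(‖y‖ + R) ^ 2 / 2) := by
      apply Real.exp_le_exp.2
      have := norm_nonneg y
      nlinarith
    have hpow : (r / 2) ^ (2 * k * q) ≤ wB α y ^ (2 * k) := by
      rw [mul_comm (2 * k) q, Real.rpow_mul (by positivity)]
      exact Real.rpow_le_rpow (by positivity) (hw y hy) (by positivity)
    gcongr
  have hmono := setLIntegral_mono' (μ := volume) hS hpt
  refine le_trans (le_of_eq ?_) hmono
  rw [setLIntegral_const, hvol, ← ENNReal.ofReal_mul (by positivity)]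
  congr 1
  have hsplit : (r / 2) ^ (2 * k * q) * (r / 2)
      = (1 / 2) ^ (2 * k * q + 1) * r ^ (2 * k * q + 1) := by
    rw [← Real.rpow_add_one (by positivity), ← Real.mul_rpow (by norm_num) hr.le]
    congr 1
    ring
  rw [mul_assoc (Real.exp _), ← hsplit, ← mul_assoc]

/-- Volume is preserved by the shear that subtracts the coordinate `p` from the coordinate `q`. -/
lemma measurePreserving_shear {N : ℕ} (p q : Fin N) (hpq : q ≠ p) :
    MeasurePreserving
      (fun (y : EuclideanSpace ℝ (Fin N)) (l : Fin N) => if l = q then y q - y p else y l) := by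
  let t : Matrix.TransvectionStruct (Fin N) ℝ := ⟨q, p, hpq, -1⟩
  have h := (Real.volume_preserving_transvectionStruct t).comp
    (PiLp.volume_preserving_ofLp (Fin N))
  convert h using 1
  ext y l
  by_cases hl : l = q
  · subst hl
    simp [t, Matrix.TransvectionStruct.toMatrix, Matrix.transvection,
      Matrix.single_mulVec, sub_eq_add_neg]
  · simp [t, Matrix.TransvectionStruct.toMatrix, Matrix.transvection,
      Matrix.single_mulVec, hl]

lemma one_le_sq_sub_sq {a b : ℝ} (ha : 0 < a) (hb : a + 1 ≤ b) : 1 ≤ b ^ 2 - a ^ 2 := by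
  nlinarith

theorem stmt3 (N : ℕ) (hN : 2 ≤ N) (k α R : ℝ) (hk : 0 < k) (hα : 0 < α) (hR : 0 < R) :
    ∃ C : ℝ, 0 < C ∧ ∀ r : ℝ, 0 < r → r < R →
      ENNReal.ofReal (C * r ^ (2 * k * min 1 α + 1)) ≤
        ∫⁻ y in {y : EuclideanSpace ℝ (Fin N) | (0 < y ⟨0, by omega⟩ ∧ StrictMono y) ∧
            (y ⟨0, by omega⟩ < r ∨ ∃ i j : Fin N, (j : ℕ) = (i : ℕ) + 1 ∧ y j - y i ≤ r)},
          ENNReal.ofReal (Real.exp (-(‖y‖ + R) ^ 2 / 2) * wB α y ^ (2 * k)) := by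
  -- The coordinate `l` lies in `(L l, L l + 1)`; the step `R + 2` leaves room for one coordinate to
  -- be moved by `r < R`.
  set L : Fin N → ℝ := fun l => (R + 2) * (l : ℝ) + 2 with hL
  have hLge : ∀ l, 2 ≤ L l := fun l => by simp only [hL]; nlinarith [(l : ℕ).cast_nonneg (α := ℝ)]
  have hLle : ∀ l, L l + 1 ≤ (R + 2) * N + 3 + R := fun l => by
    have : ((l : ℕ) : ℝ) ≤ N := by exact_mod_cast l.2.le
    simp only [hL]; nlinarith
  have hLstep : ∀ i j : Fin N, i < j → L i + (R + 2) ≤ L j := fun i j hij => by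
    have : ((i : ℕ) : ℝ) + 1 ≤ (j : ℕ) := by exact_mod_cast (show (i : ℕ) + 1 ≤ j from hij)
    simp only [hL]; nlinarith
  have hMR : R ≤ (R + 2) * N + 3 + R := by
    have : 0 ≤ (R + 2) * (N : ℝ) := by positivity
    linarith
  refine ⟨Real.exp (-(√(N * ((R + 2) * N + 3 + R) ^ 2) + R) ^ 2 / 2)
    * (1 / 2) ^ (2 * k * min 1 α + 1), by positivity, fun r hr hrR => ?_⟩
  set p : Fin N := ⟨0, by omega⟩ with hp
  set q : Fin N := ⟨1, by omega⟩ with hq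
  have hpq : p < q := by simp [hp, hq]
  have hpmin : ∀ l, l ≠ p → p < l := fun l hl => by
    rw [Fin.lt_def]
    have : (l : ℕ) ≠ 0 := fun h => hl (Fin.ext h)
    simp only [hp]; omega
  rcases le_total α 1 with h | h
  · have hmp : MeasurePreserving (fun y : EuclideanSpace ℝ (Fin N) => (y : Fin N → ℝ)) :=
      PiLp.volume_preserving_ofLp (Fin N)
    have key : ∀ y : EuclideanSpace ℝ (Fin N), (y : Fin N → ℝ) ∈ slab r p L →
        (r / 2 < y p ∧ y p < r) ∧ (∀ l, l ≠ p → L l < y l ∧ y l < L l + 1) := by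
      intro y hy
      have hy' : ∀ l, _ := fun l => hy l (Set.mem_univ l)
      refine ⟨by simpa using hy' p, fun l hl => by simpa [hl] using hy' l⟩
    have hpos : ∀ y : EuclideanSpace ℝ (Fin N), (y : Fin N → ℝ) ∈ slab r p L → ∀ l, 0 < y l := by
      intro y hy l
      obtain ⟨h1, h2⟩ := key y hy
      by_cases hl : l = p
      · subst hl; linarith
      · linarith [h2 l hl, hLge l]
    have hgap : ∀ y : EuclideanSpace ℝ (Fin N), (y : Fin N → ℝ) ∈ slab r p L →
        ∀ i j, i < j → y i + 1 ≤ y j := by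
      intro y hy i j hij
      obtain ⟨h1, h2⟩ := key y hy
      have hj : j ≠ p := fun hj => by simp [hj, hp, Fin.lt_def] at hij
      have := h2 j hj
      have := hLstep i j hij
      by_cases hi : i = p
      · subst hi; linarith [hLge p]
      · linarith [h2 i hi]
    refine lower_bound_of_subset k α R _ _ r hk hR hr _
      ((fun y : EuclideanSpace ℝ (Fin N) => (y : Fin N → ℝ)) ⁻¹' slab r p L) ?_
      (hmp.measurable (measurableSet_slab r p L)) ?_ ?_ ?_
    · intro y hy
      refine ⟨⟨hpos y hy p, fun i j hij => ?_⟩, Or.inl (key y hy).1.2⟩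
      linarith [hgap y hy i j hij]
    · rw [hmp.measure_preimage (measurableSet_slab r p L).nullMeasurableSet, volume_slab]
    · intro y hy l
      refine ⟨hpos y hy l, ?_⟩
      obtain ⟨h1, h2⟩ := key y hy
      by_cases hl : l = p
      · subst hl; linarith
      · linarith [h2 l hl, hLle l]
    · intro y hy
      obtain ⟨h1, h2⟩ := key y hy
      rw [min_eq_right h]
      exact le_wB_of_coord α (r / 2) hα (by positivity) y p h1.1.le
        (fun l hl => by linarith [h2 l hl, hLge l])
        (fun i j hij => one_le_sq_sub_sq (hpos y hy i) (hgap y hy i j hij))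
  · have hmp := measurePreserving_shear p q hpq.ne'
    set T := fun (y : EuclideanSpace ℝ (Fin N)) (l : Fin N) => if l = q then y q - y p else y l
      with hT
    have key : ∀ y : EuclideanSpace ℝ (Fin N), T y ∈ slab r q L →
        (r / 2 < y q - y p ∧ y q - y p < r) ∧ (∀ l, l ≠ q → L l < y l ∧ y l < L l + 1) := by
      intro y hy
      have hy' : ∀ l, _ := fun l => hy l (Set.mem_univ l)
      refine ⟨by simpa [hT] using hy' q, fun l hl => by simpa [hl, hT] using hy' l⟩
    have hge : ∀ y : EuclideanSpace ℝ (Fin N), T y ∈ slab r q L → ∀ l, 1 ≤ y l := by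
      intro y hy l
      obtain ⟨h1, h2⟩ := key y hy
      by_cases hl : l = q
      · subst hl; linarith [h2 p hpq.ne, hLge p]
      · linarith [h2 l hl, hLge l]
    have hgap : ∀ y : EuclideanSpace ℝ (Fin N), T y ∈ slab r q L →
        ∀ i j, i < j → ¬ (i = p ∧ j = q) → y i + 1 ≤ y j := by
      intro y hy i j hij hne
      obtain ⟨h1, h2⟩ := key y hy
      have hj : j ≠ q := fun hj => hne ⟨by
        apply Fin.ext
        rw [hj, Fin.lt_def] at hij
        simp only [hq, hp] at hij ⊢
        omega, hj⟩
      have := h2 j hj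
      by_cases hi : i = q
      · subst hi
        linarith [h2 p hpq.ne, hLstep p j (hpq.trans hij)]
      · linarith [h2 i hi, hLstep i j hij]
    refine lower_bound_of_subset k α R _ _ r hk hR hr _ (T ⁻¹' slab r q L) ?_
      (hmp.measurable (measurableSet_slab r q L)) ?_ ?_ ?_
    · intro y hy
      obtain ⟨h1, h2⟩ := key y hy
      refine ⟨⟨by linarith [hge y hy p], fun i j hij => ?_⟩, Or.inr ⟨p, q, rfl, h1.2.le⟩⟩
      by_cases hne : i = p ∧ j = q
      · rw [hne.1, hne.2]; linarith
      · linarith [hgap y hy i j hij hne]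
    · rw [hmp.measure_preimage (measurableSet_slab r q L).nullMeasurableSet, volume_slab]
    · intro y hy l
      refine ⟨by linarith [hge y hy l], ?_⟩
      obtain ⟨h1, h2⟩ := key y hy
      by_cases hl : l = q
      · subst hl
        linarith [h2 p hpq.ne, hLstep p q hpq, hLle q]
      · linarith [h2 l hl, hLle l]
    · intro y hy
      obtain ⟨h1, h2⟩ := key y hy
      rw [min_eq_left h, Real.rpow_one]
      refine le_wB_of_diff α (r / 2) hα (by positivity) y p q hpq ?_ (hge y hy)
        (fun i j hij hne => one_le_sq_sub_sq (by linarith [hge y hy i]) (hgap y hy i j hij hne))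
      nlinarith [hge y hy p, hge y hy q]
end
end

section
/- Let N ≥ 2 be an integer and let k > 0, α > 0, R > 0 be real numbers. There exists a constant K > 0, depending only on k, α, N and R, such that for every r with 0 < r < R, ∫_{{y ∈ W_B : y_1 < r}} exp(−‖y‖²/2 + R‖y‖) · w_B(y,α)^{2k} dy ≤ K · r^{2kα+1}. -/
/-!
The integrand is dominated by a product of functions of one coordinate each. Write `t = ‖y‖`.
On the region, `0 < y 0 < r` gives `(y 0) ^ α ≤ r ^ α`, and every other factor of `wB α y` is at
most `exp (c t)` for some `c`, because `0 < y l ≤ t ≤ exp t` and `y j ^ 2 - y i ^ 2 ≤ exp (2 t)`.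
Hence `wB α y ≤ r ^ α * exp (q t)` (`wB_le`), with `q` depending only on `N` and `α`.
Completing the square,
`-t² / 2 + (R + 2 k q) t ≤ (R + 2 k q)² - t² / 4`, so the integrand is at most
`exp ((R + 2 k q)²) * r ^ (2 k α) * ∏ l, exp (-(y l)² / 4)`. By Fubini (`lintegral_ofReal_prod`)
the coordinate `y 0`, confined to `(0, r)`, contributes at most `r`, while each other coordinate
contributes the Gaussian integral `√(4 π)`.
-/

open MeasureTheory Real Finset

noncomputable section

lemma exp_norm_sq {N : ℕ} (y : EuclideanSpace ℝ (Fin N)) :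
    Real.exp (-‖y‖ ^ 2 / 4) = ∏ l, Real.exp (-(1 / 4) * y l ^ 2) := by
  rw [← Real.exp_sum, EuclideanSpace.real_norm_sq_eq, ← Finset.mul_sum]
  congr 1
  ring

lemma wB_nonneg {N : ℕ} (α : ℝ) (y : EuclideanSpace ℝ (Fin N))
    (hpos : ∀ l, 0 < y l) (hmono : StrictMono y) : 0 ≤ wB α y := by
  unfold wB
  refine mul_nonneg (Finset.prod_nonneg fun l _ => Real.rpow_nonneg (hpos l).le _)
    (Finset.prod_nonneg fun i _ => Finset.prod_nonneg fun j hj => ?_)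
  have h := hmono (Finset.mem_Ioi.mp hj)
  nlinarith [hpos i, hpos j]

/-- The exponential growth rate used to bound the weight: the factors other than `(y i₀) ^ α`
contribute `α` for each `l ≠ i₀` and `2` for each pair `i < j`. -/
def growthRate (N : ℕ) (α : ℝ) (i₀ : Fin N) : ℝ :=
  (∑ _l ∈ (Finset.univ : Finset (Fin N)).erase i₀, α) + ∑ i : Fin N, ∑ _j ∈ Finset.Ioi i, (2 : ℝ)

lemma wB_le {N : ℕ} {α r : ℝ} (hα : 0 < α) (i₀ : Fin N) (y : EuclideanSpace ℝ (Fin N))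
    (hpos : ∀ l, 0 < y l) (hmono : StrictMono y) (hr : y i₀ < r) :
    wB α y ≤ r ^ α * Real.exp (growthRate N α i₀ * ‖y‖) := by
  have hle : ∀ l, y l ≤ Real.exp ‖y‖ := fun l => by
    have h1 := PiLp.norm_apply_le y l
    have h2 := Real.add_one_le_exp ‖y‖
    have h3 := Real.le_norm_self (y l)
    linarith
  have hA : ∏ l : Fin N, y l ^ α ≤
      r ^ α * ∏ _l ∈ (Finset.univ : Finset (Fin N)).erase i₀, Real.exp (α * ‖y‖) := by
    rw [← Finset.mul_prod_erase _ _ (Finset.mem_univ i₀)]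
    refine mul_le_mul (Real.rpow_le_rpow (hpos i₀).le hr.le hα.le) ?_
      (Finset.prod_nonneg fun l _ => Real.rpow_nonneg (hpos l).le _)
      (Real.rpow_nonneg ((hpos i₀).trans hr).le _)
    refine Finset.prod_le_prod (fun l _ => Real.rpow_nonneg (hpos l).le _) fun l _ => ?_
    refine (Real.rpow_le_rpow (hpos l).le (hle l) hα.le).trans_eq ?_
    rw [← Real.exp_mul, mul_comm]
  have hnn : ∀ i : Fin N, ∀ j ∈ Finset.Ioi i, 0 ≤ y j ^ 2 - y i ^ 2 := fun i j hj => by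
    have h := hmono (Finset.mem_Ioi.mp hj)
    nlinarith [hpos i, hpos j]
  have hB : ∏ i : Fin N, ∏ j ∈ Finset.Ioi i, (y j ^ 2 - y i ^ 2) ≤
      ∏ i : Fin N, ∏ _j ∈ Finset.Ioi i, Real.exp (2 * ‖y‖) := by
    refine Finset.prod_le_prod (fun i _ => Finset.prod_nonneg (hnn i)) fun i _ => ?_
    refine Finset.prod_le_prod (hnn i) fun j _ => ?_
    have h2 : Real.exp (2 * ‖y‖) = Real.exp ‖y‖ ^ 2 := by
      rw [two_mul, Real.exp_add, sq]
    rw [h2]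
    nlinarith [hle j, hpos j, sq_nonneg (y i)]
  unfold wB
  refine (mul_le_mul hA hB (Finset.prod_nonneg fun i _ => Finset.prod_nonneg (hnn i))
    (mul_nonneg (Real.rpow_nonneg ((hpos i₀).trans hr).le _)
      (Finset.prod_nonneg fun _ _ => (Real.exp_pos _).le))).trans_eq ?_
  simp only [← Real.exp_sum]
  rw [mul_assoc, ← Real.exp_add]
  simp only [growthRate, add_mul, Finset.sum_mul]

lemma lintegral_ofReal_prod {N : ℕ} (g : Fin N → ℝ → ℝ) (hg : ∀ l x, 0 ≤ g l x)
    (hi : ∀ l, Integrable (g l)) :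
    ∫⁻ y : EuclideanSpace ℝ (Fin N), ENNReal.ofReal (∏ l, g l (y l)) =
      ENNReal.ofReal (∏ l, ∫ x, g l x) := by
  have h1 := (EuclideanSpace.volume_preserving_symm_measurableEquiv_toLp (Fin N)).lintegral_comp_emb
    (MeasurableEquiv.measurableEmbedding _)
    (fun y : Fin N → ℝ => ENNReal.ofReal (∏ l, g l (y l)))
  refine h1.trans ?_
  rw [← integral_fintype_prod_volume_eq_prod, ofReal_integral_eq_lintegral_ofReal]
  · exact Integrable.fintype_prod hi
  · exact Filter.Eventually.of_forall fun y => Finset.prod_nonneg fun l _ => hg l _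

theorem stmt5 (N : ℕ) (hN : 2 ≤ N) (k α R : ℝ) (hk : 0 < k) (hα : 0 < α) (hR : 0 < R) :
    ∃ K : ℝ, 0 < K ∧ ∀ r : ℝ, 0 < r → r < R →
      (∫⁻ y in {y : EuclideanSpace ℝ (Fin N) | (0 < y ⟨0, by omega⟩ ∧ StrictMono y) ∧
          y ⟨0, by omega⟩ < r},
        ENNReal.ofReal (Real.exp (-‖y‖ ^ 2 / 2 + R * ‖y‖) * wB α y ^ (2 * k)))
        ≤ ENNReal.ofReal (K * r ^ (2 * k * α + 1)) := by
  have hN0 : 0 < N := by omega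
  set i₀ : Fin N := ⟨0, hN0⟩ with hi₀
  set q := growthRate N α i₀ with hq
  set p := R + 2 * k * q with hp
  set A := ∏ _l ∈ (Finset.univ : Finset (Fin N)).erase i₀,
    ∫ x : ℝ, Real.exp (-(1 / 4) * x ^ 2) with hA
  have hApos : 0 < A := Finset.prod_pos fun _ _ => by
    rw [integral_gaussian]
    positivity
  refine ⟨Real.exp (p ^ 2) * A, by positivity, fun r hr _ => ?_⟩
  set g : Fin N → ℝ → ℝ := fun l => if l = i₀ then (Set.Ioo 0 r).indicator 1
    else fun x => Real.exp (-(1 / 4) * x ^ 2) with hg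
  have hg0 : ∀ l x, 0 ≤ g l x := fun l x => by
    by_cases h : l = i₀
    · simp only [hg, h, if_true]
      exact Set.indicator_nonneg (fun _ _ => zero_le_one) _
    · simp only [hg, h, if_false]
      positivity
  have hgi : ∀ l, Integrable (g l) := fun l => by
    by_cases h : l = i₀
    · simp only [hg, h, if_true]
      rw [integrable_indicator_iff measurableSet_Ioo]
      exact integrableOn_const (by simp)
    · simp only [hg, h, if_false]
      exact integrable_exp_neg_mul_sq (by norm_num)
  have hgm : ∀ l, Measurable (g l) := fun l => by
    by_cases h : l = i₀
    · simp only [hg, h, if_true]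
      exact measurable_one.indicator measurableSet_Ioo
    · simp only [hg, h, if_false]
      fun_prop
  have hint : ∏ l, ∫ x, g l x = r * A := by
    rw [← Finset.mul_prod_erase _ _ (Finset.mem_univ i₀)]
    congr 1
    · simp only [hg, if_true]
      rw [integral_indicator_one measurableSet_Ioo]
      simp [hr.le]
    · refine Finset.prod_congr rfl fun l hl => ?_
      simp only [hg, Finset.ne_of_mem_erase hl, if_false]
  set C := Real.exp (p ^ 2) * r ^ (2 * k * α) with hC
  have hC0 : 0 ≤ C := by positivity
  have hbound : ∀ y ∈ {y : EuclideanSpace ℝ (Fin N) | (0 < y i₀ ∧ StrictMono y) ∧ y i₀ < r},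
      ENNReal.ofReal (Real.exp (-‖y‖ ^ 2 / 2 + R * ‖y‖) * wB α y ^ (2 * k)) ≤
        ENNReal.ofReal C * ENNReal.ofReal (∏ l, g l (y l)) := by
    rintro y ⟨⟨h0, hmono⟩, hyr⟩
    have hpos : ∀ l, 0 < y l := fun l =>
      h0.trans_le (hmono.monotone (Fin.mk_le_of_le_val (Nat.zero_le _)))
    rw [← ENNReal.ofReal_mul hC0]
    refine ENNReal.ofReal_le_ofReal ?_
    have hw : wB α y ^ (2 * k) ≤ r ^ (2 * k * α) * Real.exp (2 * k * q * ‖y‖) := by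
      refine (Real.rpow_le_rpow (wB_nonneg α y hpos hmono) (wB_le hα i₀ y hpos hmono hyr)
        (by positivity)).trans_eq ?_
      rw [Real.mul_rpow (by positivity) (by positivity), ← Real.rpow_mul hr.le, ← Real.exp_mul]
      congr 2 <;> ring
    have hprod : Real.exp (-‖y‖ ^ 2 / 4) ≤ ∏ l, g l (y l) := by
      rw [exp_norm_sq]
      refine Finset.prod_le_prod (fun _ _ => (Real.exp_pos _).le) fun l _ => ?_
      by_cases h : l = i₀
      · subst h
        simp only [hg, if_true]
        rw [Set.indicator_of_mem (show y i₀ ∈ Set.Ioo 0 r from ⟨h0, hyr⟩), Pi.one_apply,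
          Real.exp_le_one_iff]
        nlinarith [sq_nonneg (y i₀)]
      · simp only [hg, h, if_false, le_refl]
    calc Real.exp (-‖y‖ ^ 2 / 2 + R * ‖y‖) * wB α y ^ (2 * k)
        ≤ Real.exp (-‖y‖ ^ 2 / 2 + R * ‖y‖) *
          (r ^ (2 * k * α) * Real.exp (2 * k * q * ‖y‖)) := by gcongr
      _ = r ^ (2 * k * α) * Real.exp (-‖y‖ ^ 2 / 2 + p * ‖y‖) := by
        rw [mul_left_comm, ← Real.exp_add]
        congr 2
        rw [hp]
        ring
      _ ≤ r ^ (2 * k * α) * Real.exp (p ^ 2 + -‖y‖ ^ 2 / 4) := by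
        refine mul_le_mul_of_nonneg_left (Real.exp_le_exp.mpr ?_) (by positivity)
        nlinarith [sq_nonneg (‖y‖ / 2 - p)]
      _ = C * Real.exp (-‖y‖ ^ 2 / 4) := by
        rw [Real.exp_add, hC]
        ring
      _ ≤ C * ∏ l, g l (y l) := by gcongr
  have hmeas : Measurable fun y : EuclideanSpace ℝ (Fin N) =>
      ENNReal.ofReal (∏ l, g l (y l)) := by
    refine ENNReal.measurable_ofReal.comp (Finset.measurable_prod _ fun l _ => ?_)
    exact (hgm l).comp (by fun_prop)
  refine (setLIntegral_mono (hmeas.const_mul _) hbound).trans ?_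
  refine (setLIntegral_le_lintegral _ _).trans ?_
  rw [lintegral_const_mul _ hmeas, lintegral_ofReal_prod g hg0 hgi, hint,
    ← ENNReal.ofReal_mul hC0]
  refine ENNReal.ofReal_le_ofReal (le_of_eq ?_)
  rw [Real.rpow_add hr, Real.rpow_one, hC]
  ring
end
end

section
/- Let N ≥ 2 be an integer, let k > 0, α > 0, R > 0 be real numbers, and fix i ∈ {1,…,N−1}. There exists a constant K > 0, depending only on k, α, N and R, such that for every r with 0 < r < R, ∫_{{y ∈ W_B : y_{i+1} − y_i ≤ r}} exp(−‖y‖²/2 + R‖y‖) · w_B(y,α)^{2k} dy ≤ K · r^{2k+1}. -/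
open MeasureTheory Real Finset

noncomputable section

/-!
On the chamber every coordinate lies in `(0, ‖y‖]`, and `t ≤ exp t`, so every factor of `w_B` is at
most an exponential of a multiple of `‖y‖`; the factor `y_{i+1}² - y_i²` also carries the gap
`y_{i+1} - y_i ≤ r`. Hence `w_B ≤ r · 2 exp(M‖y‖)` (`wB_bound`), and completing the square bounds
the integrand by a constant times `r^{2k} exp(-‖y‖²/4)`. The remaining power of `r` is the Gaussian
mass of the strip `0 < y_{i+1} - y_i ≤ r` (`strip_bound`): after discarding the Gaussian in the
variable `y_{i+1}`, that variable ranges over an interval of length `r` by Fubini.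
-/

lemma measurableSet_gap {X : Type*} [MeasurableSpace X] {f g : X → ℝ} (hf : Measurable f)
    (hg : Measurable g) (r : ℝ) : MeasurableSet {x | g x < f x ∧ f x - g x ≤ r} :=
  (measurableSet_lt hg hf).inter (measurableSet_le (hf.sub hg) measurable_const)

/-- The Gaussian `exp(-|y|²/4)` gives the strip `0 < y_p - y_q ≤ r` mass at most linear in `r`. -/
lemma strip_bound (n : ℕ) (p q : Fin (n + 1)) (hq : q ≠ p) :
    ∃ C : ℝ, 0 ≤ C ∧ ∀ r : ℝ, 0 < r →
      ∫⁻ y in {y : Fin (n + 1) → ℝ | y q < y p ∧ y p - y q ≤ r},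
        ENNReal.ofReal (Real.exp (-(∑ l, y l ^ 2) / 4)) ≤ ENNReal.ofReal (r * C) := by
  obtain ⟨j, rfl⟩ := Fin.exists_succAbove_eq hq
  set h : (Fin n → ℝ) → ℝ := fun z => ∏ l, Real.exp (-(1 / 4) * z l ^ 2) with hh
  have hint : Integrable h :=
    Integrable.fintype_prod (f := fun _ t => Real.exp (-(1 / 4) * t ^ 2))
      (fun _ => integrable_exp_neg_mul_sq (by norm_num))
  have h0 : ∀ z, 0 ≤ h z := fun z => prod_nonneg fun _ _ => (Real.exp_pos _).le
  have hhm : Measurable h := by fun_prop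
  refine ⟨∫ z, h z, integral_nonneg h0, fun r hr => ?_⟩
  set S : Set (ℝ × (Fin n → ℝ)) := {w | w.2 j < w.1 ∧ w.1 - w.2 j ≤ r} with hS
  have hSm : MeasurableSet S :=
    measurableSet_gap (f := fun w : ℝ × (Fin n → ℝ) => w.1) (g := fun w => w.2 j)
      (by fun_prop) (by fun_prop) r
  set F : ℝ × (Fin n → ℝ) → ENNReal := S.indicator fun w => ENNReal.ofReal (h w.2) with hF
  have hFm : Measurable F := Measurable.indicator (by fun_prop) hSm
  have hT : MeasurableSet {y : Fin (n + 1) → ℝ | y (p.succAbove j) < y p ∧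
      y p - y (p.succAbove j) ≤ r} :=
    measurableSet_gap (measurable_pi_apply p) (measurable_pi_apply _) r
  have key := (volume_preserving_piFinSuccAbove (fun _ : Fin (n + 1) => ℝ) p)
  calc _ ≤ ∫⁻ y : Fin (n + 1) → ℝ, F (MeasurableEquiv.piFinSuccAbove (fun _ => ℝ) p y) := by
        rw [← lintegral_indicator hT]
        refine lintegral_mono fun y => ?_
        by_cases hy : y (p.succAbove j) < y p ∧ y p - y (p.succAbove j) ≤ r
        · have hy' : MeasurableEquiv.piFinSuccAbove (fun _ => ℝ) p y ∈ S := hy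
          rw [hF, Set.indicator_of_mem hy', Set.indicator_of_mem (by exact hy)]
          refine ENNReal.ofReal_le_ofReal ?_
          change _ ≤ ∏ l, Real.exp (-(1 / 4) * y (p.succAbove l) ^ 2)
          rw [← Real.exp_sum, Real.exp_le_exp, ← Finset.mul_sum, Fin.sum_univ_succAbove _ p]
          nlinarith [sq_nonneg (y p)]
        · rw [Set.indicator_of_notMem (by exact hy)]
          exact zero_le
    _ = ∫⁻ w, F w := key.lintegral_comp hFm
    _ = ∫⁻ z, ∫⁻ x, F (x, z) := by
        rw [Measure.volume_eq_prod, lintegral_prod_symm _ hFm.aemeasurable]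
    _ = ∫⁻ z, ENNReal.ofReal r * ENNReal.ofReal (h z) := by
        refine lintegral_congr fun z => ?_
        have : (fun x => F (x, z)) = (Set.Ioc (z j) (z j + r)).indicator
            fun _ => ENNReal.ofReal (h z) := by
          funext x
          simp only [hF, hS, Set.indicator, Set.mem_ofPred_eq, Set.mem_Ioc, sub_le_iff_le_add']
        rw [this, lintegral_indicator measurableSet_Ioc]
        simp [mul_comm]
    _ = ENNReal.ofReal (r * ∫ z, h z) := by
        rw [lintegral_const_mul _ (by fun_prop), ENNReal.ofReal_mul hr.le,
          ofReal_integral_eq_lintegral_ofReal hint (ae_of_all _ h0)]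

/-- On the chamber, `w_B` is at most the gap bound `r` times an exponential in `‖y‖`. -/
lemma wB_bound (N : ℕ) (α : ℝ) (hα : 0 < α) (p q : Fin N) (hqp : q < p) :
    ∃ M : ℝ, ∀ (r : ℝ) (y : EuclideanSpace ℝ (Fin N)), (∀ l, 0 < y l) → StrictMono y →
      y p - y q ≤ r → 0 ≤ wB α y ∧ wB α y ≤ r * (2 * Real.exp (M * ‖y‖)) := by
  set T : Finset (Σ _ : Fin N, Fin N) := Finset.univ.sigma fun a => Finset.Ioi a with hT
  have hmem : (⟨q, p⟩ : Σ _ : Fin N, Fin N) ∈ T := by simp [hT, hqp]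
  set m := (T.erase ⟨q, p⟩).card with hm
  refine ⟨N * α + 1 + m * 2, fun r y hpos hmono hr => ?_⟩
  have hle : ∀ l, y l ≤ ‖y‖ := fun l => (le_abs_self _).trans (PiLp.norm_apply_le y l)
  have hexp : ‖y‖ ≤ Real.exp ‖y‖ := by linarith [Real.add_one_le_exp ‖y‖]
  have hn := norm_nonneg y
  have h1 : ∏ l : Fin N, y l ^ α ≤ Real.exp (N * α * ‖y‖) := by
    calc ∏ l : Fin N, y l ^ α ≤ ∏ _l : Fin N, Real.exp (α * ‖y‖) := by
          refine prod_le_prod (fun l _ => Real.rpow_nonneg (hpos l).le _) fun l _ => ?_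
          rw [mul_comm, Real.exp_mul]
          exact Real.rpow_le_rpow (hpos l).le ((hle l).trans hexp) hα.le
      _ = _ := by
          rw [prod_const, card_univ, Fintype.card_fin, ← Real.exp_nat_mul, mul_assoc]
  have h10 : 0 ≤ ∏ l : Fin N, y l ^ α := prod_nonneg fun l _ => Real.rpow_nonneg (hpos l).le _
  have hf0 : ∀ x ∈ T, 0 ≤ y x.2 ^ 2 - y x.1 ^ 2 := by
    intro x hx
    have hx' : x.1 < x.2 := by simpa [hT] using hx
    nlinarith [hmono hx', hpos x.1]
  have h2 : ∏ a : Fin N, ∏ b ∈ Finset.Ioi a, (y b ^ 2 - y a ^ 2)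
      = (y p ^ 2 - y q ^ 2) * ∏ x ∈ T.erase ⟨q, p⟩, (y x.2 ^ 2 - y x.1 ^ 2) := by
    rw [mul_prod_erase T (fun x => y x.2 ^ 2 - y x.1 ^ 2) hmem, hT, prod_sigma]
  have h3 : ∏ x ∈ T.erase ⟨q, p⟩, (y x.2 ^ 2 - y x.1 ^ 2) ≤ Real.exp (m * 2 * ‖y‖) := by
    calc _ ≤ ∏ _x ∈ T.erase ⟨q, p⟩, Real.exp (2 * ‖y‖) := by
          refine prod_le_prod (fun x hx => hf0 x (mem_of_mem_erase hx)) fun x _ => ?_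
          have : Real.exp (2 * ‖y‖) = Real.exp ‖y‖ ^ 2 := by
            rw [← Real.exp_nat_mul]; norm_num
          rw [this]
          nlinarith [hle x.2, hpos x.2, sq_nonneg (y x.1)]
      _ = _ := by rw [prod_const, ← Real.exp_nat_mul, mul_assoc]
  have h30 : 0 ≤ ∏ x ∈ T.erase ⟨q, p⟩, (y x.2 ^ 2 - y x.1 ^ 2) :=
    prod_nonneg fun x hx => hf0 x (mem_of_mem_erase hx)
  have h40 : 0 ≤ y p ^ 2 - y q ^ 2 := hf0 _ hmem
  have hgap : 0 < y p - y q := sub_pos.2 (hmono hqp)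
  have h4 : y p ^ 2 - y q ^ 2 ≤ r * (2 * Real.exp ‖y‖) := by
    calc y p ^ 2 - y q ^ 2 = (y p - y q) * (y p + y q) := by ring
      _ ≤ r * (2 * Real.exp ‖y‖) := by
        refine mul_le_mul hr ?_ (by linarith [hpos p, hpos q]) (by linarith)
        linarith [hle p, hle q]
  unfold wB
  rw [h2]
  refine ⟨by positivity, ?_⟩
  calc _ ≤ Real.exp (N * α * ‖y‖) * (r * (2 * Real.exp ‖y‖) * Real.exp (m * 2 * ‖y‖)) := by
        have : 0 ≤ r * (2 * Real.exp ‖y‖) := h40.trans h4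
        gcongr
    _ = _ := by
        rw [show (N * α + 1 + m * 2) * ‖y‖ = N * α * ‖y‖ + ‖y‖ + m * 2 * ‖y‖ by ring,
          Real.exp_add, Real.exp_add]
        ring

theorem stmt6 (N : ℕ) (hN : 2 ≤ N) (k α R : ℝ) (hk : 0 < k) (hα : 0 < α) (hR : 0 < R)
    (i : Fin N) (hi : (i : ℕ) + 1 < N) :
    ∃ K : ℝ, 0 < K ∧ ∀ r : ℝ, 0 < r → r < R →
      (∫⁻ y in {y : EuclideanSpace ℝ (Fin N) | (0 < y ⟨0, by omega⟩ ∧ StrictMono y) ∧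
          y ⟨(i : ℕ) + 1, hi⟩ - y i ≤ r},
        ENNReal.ofReal (Real.exp (-‖y‖ ^ 2 / 2 + R * ‖y‖) * wB α y ^ (2 * k)))
        ≤ ENNReal.ofReal (K * r ^ (2 * k + 1)) := by
  set p : Fin N := ⟨(i : ℕ) + 1, hi⟩ with hp
  have hip : i < p := Fin.lt_def.2 (Nat.lt_succ_self _)
  obtain ⟨M, hM⟩ := wB_bound N α hα p i hip
  obtain ⟨C, hC0, hC⟩ : ∃ C : ℝ, 0 ≤ C ∧ ∀ r : ℝ, 0 < r →
      ∫⁻ y in {y : Fin N → ℝ | y i < y p ∧ y p - y i ≤ r},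
        ENNReal.ofReal (Real.exp (-(∑ l, y l ^ 2) / 4)) ≤ ENNReal.ofReal (r * C) := by
    clear_value p
    cases N with
    | zero => omega
    | succ n => exact strip_bound n p i hip.ne
  set A : ℝ := R + 2 * k * M with hA
  set D : ℝ := 2 ^ (2 * k) * Real.exp (A ^ 2) with hD
  have hD0 : 0 < D := by positivity
  refine ⟨D * (C + 1), by positivity, fun r hr _ => ?_⟩
  set U : Set (Fin N → ℝ) := {y | y i < y p ∧ y p - y i ≤ r} with hU
  have hUm : MeasurableSet U :=
    measurableSet_gap (measurable_pi_apply p) (measurable_pi_apply i) r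
  set V : Set (EuclideanSpace ℝ (Fin N)) := WithLp.ofLp ⁻¹' U with hV
  have hVm : MeasurableSet V := by
    exact (PiLp.volume_preserving_ofLp (Fin N)).measurable hUm
  set G : (Fin N → ℝ) → ENNReal := fun y => ENNReal.ofReal (Real.exp (-(∑ l, y l ^ 2) / 4)) with hG
  have hGm : Measurable G := by fun_prop
  have hnorm : ∀ y : EuclideanSpace ℝ (Fin N), ∑ l, y.ofLp l ^ 2 = ‖y‖ ^ 2 := fun y => by
    rw [EuclideanSpace.norm_sq_eq]; simp
  have hsub : {y : EuclideanSpace ℝ (Fin N) | (0 < y ⟨0, by omega⟩ ∧ StrictMono y) ∧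
      y p - y i ≤ r} ⊆ V := fun y hy => ⟨hy.1.2 hip, hy.2⟩
  have hpt : ∀ y ∈ {y : EuclideanSpace ℝ (Fin N) | (0 < y ⟨0, by omega⟩ ∧ StrictMono y) ∧
      y p - y i ≤ r},
      ENNReal.ofReal (Real.exp (-‖y‖ ^ 2 / 2 + R * ‖y‖) * wB α y ^ (2 * k))
        ≤ ENNReal.ofReal (D * r ^ (2 * k)) * G y.ofLp := by
    rintro y ⟨⟨h0, hmono⟩, hgap⟩
    have hpos : ∀ l, 0 < y l := fun l =>
      h0.trans_le (hmono.monotone (Fin.le_def.2 (Nat.zero_le _)))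
    obtain ⟨hw0, hw⟩ := hM r y hpos hmono hgap
    rw [hG, ← ENNReal.ofReal_mul (by positivity)]
    refine ENNReal.ofReal_le_ofReal ?_
    rw [hnorm]
    calc _ ≤ Real.exp (-‖y‖ ^ 2 / 2 + R * ‖y‖) * (r * (2 * Real.exp (M * ‖y‖))) ^ (2 * k) := by
          gcongr
      _ = 2 ^ (2 * k) * r ^ (2 * k) * Real.exp (-‖y‖ ^ 2 / 2 + A * ‖y‖) := by
          rw [Real.mul_rpow hr.le (by positivity), Real.mul_rpow (by norm_num) (by positivity),
            ← Real.exp_mul,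
            show -‖y‖ ^ 2 / 2 + A * ‖y‖ = (-‖y‖ ^ 2 / 2 + R * ‖y‖) + M * ‖y‖ * (2 * k) by
              rw [hA]; ring, Real.exp_add _ (M * ‖y‖ * (2 * k))]
          ring
      _ ≤ 2 ^ (2 * k) * r ^ (2 * k) * Real.exp (A ^ 2 + -‖y‖ ^ 2 / 4) := by
          refine mul_le_mul_of_nonneg_left (Real.exp_le_exp.2 ?_) (by positivity)
          -- The difference of the two exponents is `(‖y‖ / 2 - A)²`.
          nlinarith [sq_nonneg (‖y‖ / 2 - A)]
      _ = _ := by rw [Real.exp_add, hD]; ring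
  calc _ ≤ ∫⁻ y in {y : EuclideanSpace ℝ (Fin N) | (0 < y ⟨0, by omega⟩ ∧ StrictMono y) ∧
          y p - y i ≤ r}, ENNReal.ofReal (D * r ^ (2 * k)) * G y.ofLp :=
        setLIntegral_mono (by fun_prop) hpt
    _ ≤ ∫⁻ y in V, ENNReal.ofReal (D * r ^ (2 * k)) * G y.ofLp := lintegral_mono_set hsub
    _ = ENNReal.ofReal (D * r ^ (2 * k)) * ∫⁻ y in V, G y.ofLp :=
        lintegral_const_mul _ (by fun_prop)
    _ = ENNReal.ofReal (D * r ^ (2 * k)) * ∫⁻ y in U, G y := by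
        rw [(PiLp.volume_preserving_ofLp (Fin N)).setLIntegral_comp_preimage hUm hGm]
    _ ≤ ENNReal.ofReal (D * r ^ (2 * k)) * ENNReal.ofReal (r * C) := by
        gcongr
        exact hC r hr
    _ ≤ _ := by
        rw [← ENNReal.ofReal_mul (by positivity)]
        refine ENNReal.ofReal_le_ofReal ?_
        rw [Real.rpow_add_one hr.ne']
        have : 0 < D * r ^ (2 * k) * r := by positivity
        nlinarith
end
end

section
/- Let N ≥ 2 be an integer and let k > 0, α > 0, R > 0 be real numbers. There exists a constant c > 0, depending only on k, α, N and R, such that for every r with 0 < r < R, ∫_{{y ∈ W_B : 0 < y_1 < r and y_{j+1} − y_j > R for all j ∈ {1,…,N−1}}} exp(−(‖y‖+R)²/2) · w_B(y,α)^{2k} dy ≥ c · r^{2kα+1}. -/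
/-!
The integrand is bounded below on a box. For `0 < r < R` take `y 0 ∈ (r/2, r)` and
`y j ∈ (3jR, 3jR + R)` for `j ≥ 1`. The box lies in the domain of integration, because distinct
coordinates are more than `2R` apart, and its volume is `(r/2) R^(N-1)`. On it the norm is bounded
independently of `r`, so the exponential is bounded below (`norm_le_of_strips`), while
`y 0 ^ α ≥ (r/2)^α` and every other factor of `wB` is bounded below by a positive constant
(`wB_lower`). Raising to the power `2k` and multiplying by the volume gives
`r^(2kα) · r` up to a positive constant.
-/

open MeasureTheory Real Finset

noncomputable section

lemma gap_of_strips {n : ℕ} {R : ℝ} (hR : 0 < R) {y : EuclideanSpace ℝ (Fin (n + 1))}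
    (hup : ∀ j : Fin (n + 1), y j < 3 * (j : ℕ) * R + R)
    (hlo' : ∀ j : Fin (n + 1), 3 * (j : ℕ) * R < y j) {i j : Fin (n + 1)} (hij : i < j) :
    R < y j - y i := by
  have h : ((i : ℕ) : ℝ) + 1 ≤ (j : ℕ) := by exact_mod_cast hij
  have := mul_le_mul_of_nonneg_right h hR.le
  linarith [hup i, hlo' j]

lemma norm_le_of_strips {n : ℕ} {R : ℝ} {y : EuclideanSpace ℝ (Fin (n + 1))}
    (hlo : ∀ j, 0 < y j) (hup : ∀ j : Fin (n + 1), y j < 3 * (j : ℕ) * R + R) :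
    ‖y‖ ≤ √(∑ j : Fin (n + 1), (3 * (j : ℕ) * R + R) ^ 2) := by
  rw [EuclideanSpace.norm_eq]
  refine Real.sqrt_le_sqrt (Finset.sum_le_sum fun j _ => ?_)
  rw [Real.norm_of_nonneg (hlo j).le]
  exact pow_le_pow_left₀ (hlo j).le (hup j).le 2

lemma wB_lower {n : ℕ} {α R r : ℝ} (hα : 0 < α) (hR : 0 < R) (hr : 0 < r)
    {y : EuclideanSpace ℝ (Fin (n + 1))} (hy0 : r / 2 < y 0)
    (hlo : ∀ j, 0 < y j) (hgap : ∀ i j, i < j → R < y j - y i) :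
    (r / 2) ^ α * ((∏ _l : Fin n, R ^ α) *
      ∏ i : Fin (n + 1), ∏ _j ∈ Finset.Ioi i, R ^ 2) ≤ wB α y := by
  have hA : (r / 2) ^ α * (∏ _l : Fin n, R ^ α) ≤ ∏ l, y l ^ α := by
    rw [Fin.prod_univ_succ]
    refine mul_le_mul (Real.rpow_le_rpow (by positivity) hy0.le hα.le)
      (Finset.prod_le_prod (fun _ _ => by positivity) fun l _ => ?_)
      (Finset.prod_nonneg fun _ _ => by positivity) (Real.rpow_nonneg (hlo 0).le _)
    refine Real.rpow_le_rpow hR.le ?_ hα.le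
    linarith [hgap 0 l.succ (Fin.succ_pos l), hlo 0]
  have hB : (∏ i : Fin (n + 1), ∏ _j ∈ Finset.Ioi i, R ^ 2) ≤
      ∏ i : Fin (n + 1), ∏ j ∈ Finset.Ioi i, (y j ^ 2 - y i ^ 2) := by
    refine Finset.prod_le_prod (fun _ _ => Finset.prod_nonneg fun _ _ => by positivity)
      fun i _ => Finset.prod_le_prod (fun _ _ => by positivity) fun j hj => ?_
    nlinarith [hgap i j (Finset.mem_Ioi.1 hj), hlo i]
  rw [← mul_assoc]
  exact mul_le_mul hA hB
    (Finset.prod_nonneg fun _ _ => Finset.prod_nonneg fun _ _ => by positivity)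
    (Finset.prod_nonneg fun l _ => Real.rpow_nonneg (hlo l).le _)

/-- The product of `(r/2, r)` in coordinate `0` with the strips `(3jR, 3jR + R)`, `j ≥ 1`. -/
def stripBox (n : ℕ) (R r : ℝ) : Set (EuclideanSpace ℝ (Fin (n + 1))) :=
  WithLp.ofLp ⁻¹' Set.univ.pi fun j : Fin (n + 1) =>
    Set.Ioo ((Fin.cons (r / 2) fun i : Fin n => 3 * ((i : ℝ) + 1) * R : Fin (n + 1) → ℝ) j)
      ((Fin.cons r fun i : Fin n => 3 * ((i : ℝ) + 1) * R + R : Fin (n + 1) → ℝ) j)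

lemma measurableSet_stripBox (n : ℕ) (R r : ℝ) : MeasurableSet (stripBox n R r) :=
  (PiLp.volume_preserving_ofLp (Fin (n + 1))).measurable
    (MeasurableSet.univ_pi fun _ => measurableSet_Ioo)

lemma volume_stripBox (n : ℕ) {R r : ℝ} (hR : 0 < R) (hr : 0 < r) :
    volume (stripBox n R r) = ENNReal.ofReal (r / 2 * R ^ n) := by
  unfold stripBox
  rw [(PiLp.volume_preserving_ofLp (Fin (n + 1))).measure_preimage
    (MeasurableSet.univ_pi fun _ => measurableSet_Ioo).nullMeasurableSet, Real.volume_pi_Ioo,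
    Fin.prod_univ_succ, ENNReal.ofReal_mul (by positivity), ENNReal.ofReal_pow hR.le]
  simp [sub_half]

lemma mem_stripBox {n : ℕ} {R r : ℝ} {y : EuclideanSpace ℝ (Fin (n + 1))}
    (hr : 0 < r) (hrR : r < R) (hy : y ∈ stripBox n R r) :
    (r / 2 < y 0 ∧ y 0 < r) ∧ (∀ j, 0 < y j) ∧
      (∀ j : Fin (n + 1), y j < 3 * (j : ℕ) * R + R) ∧
      (∀ j : Fin (n + 1), 3 * (j : ℕ) * R < y j) := by
  have hR : 0 < R := hr.trans hrR
  have h : ∀ j, _ := fun j => hy j (Set.mem_univ j)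
  have h0 := h 0
  simp only [Fin.cons_zero, Set.mem_Ioo] at h0
  have hs : ∀ i : Fin n, 3 * ((i : ℝ) + 1) * R < y i.succ ∧
      y i.succ < 3 * ((i : ℝ) + 1) * R + R := by
    intro i
    simpa only [Fin.cons_succ, Set.mem_Ioo] using h i.succ
  refine ⟨h0, fun j => ?_, fun j => ?_, fun j => ?_⟩ <;>
    refine Fin.cases ?_ (fun i => ?_) j
  · linarith
  · exact lt_trans (by positivity) (hs i).1
  · simp; linarith
  · simpa using (hs i).2
  · simp; linarith
  · simpa using (hs i).1

theorem stmt15 (N : ℕ) (hN : 2 ≤ N) (k α R : ℝ) (hk : 0 < k) (hα : 0 < α) (hR : 0 < R) :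
    ∃ c : ℝ, 0 < c ∧ ∀ r : ℝ, 0 < r → r < R →
      ENNReal.ofReal (c * r ^ (2 * k * α + 1)) ≤
        ∫⁻ y in {y : EuclideanSpace ℝ (Fin N) | (0 < y ⟨0, by omega⟩ ∧ StrictMono y) ∧
            y ⟨0, by omega⟩ < r ∧
            ∀ j : Fin N, ∀ hj : (j : ℕ) + 1 < N, R < y ⟨(j : ℕ) + 1, hj⟩ - y j},
          ENNReal.ofReal (Real.exp (-(‖y‖ + R) ^ 2 / 2) * wB α y ^ (2 * k)) := by
  obtain ⟨n, rfl⟩ : ∃ n, N = n + 1 := ⟨N - 1, by omega⟩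
  obtain ⟨M, hM⟩ : ∃ M, M = √(∑ j : Fin (n + 1), (3 * ((j : ℕ) : ℝ) * R + R) ^ 2) := ⟨_, rfl⟩
  obtain ⟨C, hC⟩ : ∃ C, C = (∏ _l : Fin n, R ^ α) *
      ∏ i : Fin (n + 1), ∏ _j ∈ Finset.Ioi i, R ^ 2 := ⟨_, rfl⟩
  have hCpos : 0 < C := hC ▸ mul_pos (Finset.prod_pos fun _ _ => by positivity)
    (Finset.prod_pos fun _ _ => Finset.prod_pos fun _ _ => by positivity)
  refine ⟨Real.exp (-(M + R) ^ 2 / 2) * ((1 / 2) ^ α * C) ^ (2 * k) * (R ^ n / 2),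
    by positivity, fun r hr hrR => ?_⟩
  have hsplit : Real.exp (-(M + R) ^ 2 / 2) * ((1 / 2) ^ α * C) ^ (2 * k) * (R ^ n / 2)
        * r ^ (2 * k * α + 1) =
      (Real.exp (-(M + R) ^ 2 / 2) * ((r / 2) ^ α * C) ^ (2 * k)) * (r / 2 * R ^ n) := by
    have e : (r / 2) ^ α * C = r ^ α * ((1 / 2) ^ α * C) := by
      rw [div_eq_mul_one_div, Real.mul_rpow hr.le (by norm_num)]; ring
    rw [e, Real.mul_rpow (x := r ^ α) (by positivity) (by positivity), ← Real.rpow_mul hr.le,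
      Real.rpow_add hr, Real.rpow_one, mul_comm α (2 * k)]
    ring
  rw [hsplit, ENNReal.ofReal_mul (by positivity), ← volume_stripBox n hR hr,
    ← setLIntegral_const]
  refine (setLIntegral_mono' (measurableSet_stripBox n R r) fun y hy => ?_).trans
    (lintegral_mono_set fun y hy => ?_)
  · obtain ⟨h0, hlo, hup, hlo'⟩ := mem_stripBox hr hrR hy
    have hn : ‖y‖ ≤ M := hM ▸ norm_le_of_strips hlo hup
    have hw := wB_lower hα hR hr h0.1 hlo fun i j hij => gap_of_strips hR hup hlo' hij
    rw [← hC] at hw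
    refine ENNReal.ofReal_le_ofReal (mul_le_mul (Real.exp_le_exp.2 ?_)
      (Real.rpow_le_rpow (by positivity) hw (by positivity)) (by positivity) (by positivity))
    have := pow_le_pow_left₀ (by positivity) (add_le_add_left hn R) 2
    linarith
  · obtain ⟨h0, hlo, hup, hlo'⟩ := mem_stripBox hr hrR hy
    have hgap := fun i j hij => gap_of_strips (i := i) (j := j) hR hup hlo' hij
    refine ⟨⟨hlo _, fun i j hij => ?_⟩, h0.2, fun j hj => hgap _ _ ?_⟩
    · linarith [hgap i j hij]
    · simp [Fin.lt_def]
end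
end

section
/- Let N ≥ 2 be an integer, let k > 0, α > 0, R > 0 be real numbers, and fix i ∈ {1,…,N−1}. There exists a constant c > 0, depending only on k, α, N and R, such that for every r with 0 < r < R, ∫_{{y ∈ W_B : y_1 > R, 0 < y_{i+1} − y_i < r, and y_{j+1} − y_j > R for all j ∈ {1,…,N−1} with j ≠ i}} exp(−(‖y‖+R)²/2) · w_B(y,α)^{2k} dy ≥ c · r^{2k+1}. -/
/-!
The linear map sending `y` to its gaps `(y_1, y_2 - y_1, …, y_N - y_{N-1})` is invertible, so the
set `S` of those `y` whose `(i+1)`-st gap lies in `(r/2, r)` and whose other gaps lie in `(R, 2R)`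
has volume equal to a positive constant times `r` (`exists_volume_gapBox`).
`S` lies inside the domain of integration, and on `S` the norm is bounded in terms of `N` and `R`
(`norm_le_of_mem_gapBox`), while every factor of the weight is bounded below by a positive
constant, except for `y_{i+1}² - y_i² ≥ R r`; hence `w_B ≥ C r` (`exists_wB_lower_bound`).
Integrating the constant lower bound over `S` gives `r^{2k} · r`.
-/


open MeasureTheory Real Finset

noncomputable section

/-- The linear map `y ↦ (y_1, y_2 - y_1, …, y_N - y_{N-1})`. -/
def gapMap (N : ℕ) : (Fin N → ℝ) →ₗ[ℝ] (Fin N → ℝ) :=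
  LinearMap.pi fun j : Fin N => (LinearMap.proj j : (Fin N → ℝ) →ₗ[ℝ] ℝ) -
    if (j : ℕ) = 0 then 0 else LinearMap.proj (⟨(j : ℕ) - 1, by omega⟩ : Fin N)

lemma gapMap_zero {N : ℕ} (y : Fin N → ℝ) (h : 0 < N) : gapMap N y ⟨0, h⟩ = y ⟨0, h⟩ := by
  simp [gapMap]

lemma gapMap_succ {N : ℕ} (y : Fin N → ℝ) (n : ℕ) (h : n + 1 < N) :
    gapMap N y ⟨n + 1, h⟩ = y ⟨n + 1, h⟩ - y ⟨n, by omega⟩ := by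
  simp [gapMap]

lemma gapMap_det_ne_zero (N : ℕ) : LinearMap.det (gapMap N) ≠ 0 := by
  intro h
  have hlt := LinearMap.bot_lt_ker_of_det_eq_zero h
  refine hlt.ne' ((LinearMap.ker_eq_bot').2 fun y hy => ?_)
  have key : ∀ n (hn : n < N), y ⟨n, hn⟩ = 0 := by
    intro n
    induction n with
    | zero =>
      intro hn
      rw [← gapMap_zero y hn, hy]; rfl
    | succ n ih =>
      intro hn
      have h1 := gapMap_succ y n hn
      rw [hy, ih (by omega)] at h1
      simpa using h1.symm
  funext j
  exact key j j.2

/-- The points of `ℝ^N` whose gap with (zero-based) index `m` lies in `(r/2, r)` and whose other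
gaps, the coordinate `y_1` included, lie in `(R, 2R)`. -/
def gapBox (N m : ℕ) (R r : ℝ) : Set (EuclideanSpace ℝ (Fin N)) :=
  {y | ∀ j : Fin N, gapMap N y.ofLp j ∈
    Set.Ioo (if (j : ℕ) = m then r / 2 else R) (if (j : ℕ) = m then r else 2 * R)}

lemma gapBox_eq (N m : ℕ) (R r : ℝ) :
    gapBox N m R r = (WithLp.ofLp : EuclideanSpace ℝ (Fin N) → (Fin N → ℝ)) ⁻¹'
      (gapMap N ⁻¹' Set.pi Set.univ fun j : Fin N =>
        Set.Ioo (if (j : ℕ) = m then r / 2 else R) (if (j : ℕ) = m then r else 2 * R)) := by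
  ext y
  simp [gapBox]

lemma measurableSet_gapBox_aux (N m : ℕ) (R r : ℝ) :
    MeasurableSet (gapMap N ⁻¹' Set.pi Set.univ fun j : Fin N =>
        Set.Ioo (if (j : ℕ) = m then r / 2 else R) (if (j : ℕ) = m then r else 2 * R)) :=
  (MeasurableSet.univ_pi fun _ => measurableSet_Ioo).preimage
    (LinearMap.continuous_of_finiteDimensional (gapMap N)).measurable

lemma measurableSet_gapBox (N m : ℕ) (R r : ℝ) : MeasurableSet (gapBox N m R r) := by
  rw [gapBox_eq]
  exact (PiLp.volume_preserving_ofLp (Fin N)).measurable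
    (measurableSet_gapBox_aux N m R r)

lemma exists_volume_gapBox (N m : ℕ) (hm : m < N) (R : ℝ) (hR : 0 < R) :
    ∃ c : ℝ, 0 < c ∧ ∀ r : ℝ, 0 < r → volume (gapBox N m R r) = ENNReal.ofReal (c * r) := by
  have hdet := gapMap_det_ne_zero N
  refine ⟨|(LinearMap.det (gapMap N))⁻¹| * ((∏ _j : Fin N, R) * (2 * R)⁻¹), ?_, ?_⟩
  · have := abs_pos.2 (inv_ne_zero hdet)
    have := Finset.prod_pos (s := Finset.univ) fun (_ : Fin N) _ => hR
    positivity
  intro r hr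
  rw [gapBox_eq, (PiLp.volume_preserving_ofLp (Fin N)).measure_preimage
    (measurableSet_gapBox_aux N m R r).nullMeasurableSet,
    Measure.addHaar_preimage_linearMap _ hdet, Real.volume_pi_Ioo,
    ← ENNReal.ofReal_prod_of_nonneg, ← ENNReal.ofReal_mul (abs_nonneg _)]
  · congr 1
    -- Each side length is `R`, times the correction `r / (2R)` at the index `m`.
    have h1 : ∀ j : Fin N, (if (j : ℕ) = m then r else 2 * R) - (if (j : ℕ) = m then r / 2 else R)
        = R * (if j = ⟨m, hm⟩ then (2 * R)⁻¹ * r else 1) := by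
      intro j
      simp only [Fin.ext_iff]
      split_ifs
      · field_simp; ring
      · ring
    simp_rw [h1]
    rw [Finset.prod_mul_distrib, Finset.prod_ite_eq' Finset.univ (⟨m, hm⟩ : Fin N)]
    simp only [Finset.mem_univ, if_true]
    ring
  · intro j _
    split_ifs <;> linarith

lemma strictMono_of_gaps {N : ℕ} (y : Fin N → ℝ)
    (h : ∀ n (hn : n + 1 < N), y ⟨n, by omega⟩ < y ⟨n + 1, hn⟩) : StrictMono y := by
  have key : ∀ b (hb : b < N) a (hab : a < b), y ⟨a, by omega⟩ < y ⟨b, hb⟩ := by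
    intro b
    induction b with
    | zero => intro _ a hab; omega
    | succ b ih =>
      intro hb a hab
      have h1 := h b hb
      rcases Nat.lt_succ_iff_lt_or_eq.1 hab with h2 | rfl
      · exact (ih (by omega) a h2).trans h1
      · exact h1
  intro a b hab
  exact key b b.2 a hab

section

variable {N m : ℕ} {R r : ℝ} {y : EuclideanSpace ℝ (Fin N)}

lemma gapBox_zero (hy : y ∈ gapBox N (m + 1) R r) (h : 0 < N) :
    R < y ⟨0, h⟩ ∧ y ⟨0, h⟩ < 2 * R := by
  have := hy ⟨0, h⟩
  rw [gapMap_zero] at this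
  simpa using this

lemma gapBox_succ_eq (hy : y ∈ gapBox N (m + 1) R r) (h : m + 1 < N) :
    r / 2 < y ⟨m + 1, h⟩ - y ⟨m, by omega⟩ ∧ y ⟨m + 1, h⟩ - y ⟨m, by omega⟩ < r := by
  have := hy ⟨m + 1, h⟩
  rw [gapMap_succ] at this
  simpa only [if_true, Set.mem_Ioo] using this

lemma gapBox_succ_ne (hy : y ∈ gapBox N (m + 1) R r) {n : ℕ} (hn : n ≠ m) (h : n + 1 < N) :
    R < y ⟨n + 1, h⟩ - y ⟨n, by omega⟩ ∧ y ⟨n + 1, h⟩ - y ⟨n, by omega⟩ < 2 * R := by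
  have := hy ⟨n + 1, h⟩
  rw [gapMap_succ] at this
  simpa only [add_left_inj, hn, if_false, Set.mem_Ioo] using this

lemma gapBox_strictMono (hR : 0 < R) (hr : 0 < r) (hy : y ∈ gapBox N (m + 1) R r) :
    StrictMono y := by
  refine strictMono_of_gaps _ fun n hn => ?_
  by_cases h : n = m
  · subst h
    linarith [(gapBox_succ_eq hy hn).1]
  · linarith [(gapBox_succ_ne hy h hn).1]

lemma gapBox_lower (hR : 0 < R) (hr : 0 < r) (hy : y ∈ gapBox N (m + 1) R r) (l : Fin N) :
    R < y l := by
  have h0 : 0 < N := l.pos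
  exact (gapBox_zero hy h0).1.trans_le
    ((gapBox_strictMono hR hr hy).monotone (Fin.mk_le_of_le_val (Nat.zero_le _)))

lemma gapBox_upper (hR : 0 < R) (hrR : r < R) (hy : y ∈ gapBox N (m + 1) R r) (l : Fin N) :
    y l ≤ N * (2 * R) := by
  have key : ∀ n (hn : n < N), y ⟨n, hn⟩ ≤ (n + 1) * (2 * R) := by
    intro n
    induction n with
    | zero =>
      intro hn
      have := (gapBox_zero hy hn).2
      push_cast
      linarith
    | succ n ih =>
      intro hn
      have h1 := ih (by omega)
      push_cast
      by_cases h : n = m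
      · subst h
        linarith [(gapBox_succ_eq hy hn).2]
      · linarith [(gapBox_succ_ne hy h hn).2]
  refine (key l l.2).trans ?_
  have : ((l : ℕ) : ℝ) + 1 ≤ N := by exact_mod_cast l.2
  gcongr

lemma norm_le_of_mem_gapBox (hR : 0 < R) (hr : 0 < r) (hrR : r < R)
    (hy : y ∈ gapBox N (m + 1) R r) : ‖y‖ ≤ √(∑ _l : Fin N, (N * (2 * R)) ^ 2) := by
  rw [EuclideanSpace.norm_eq]
  refine Real.sqrt_le_sqrt (Finset.sum_le_sum fun l _ => ?_)
  have h1 := gapBox_lower hR hr hy l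
  rw [Real.norm_of_nonneg (by linarith)]
  exact pow_le_pow_left₀ (by linarith) (gapBox_upper hR hrR hy l) 2

/-- The lower bound `2R²` for a factor of the Vandermonde product, with the correction `r / (2R)`
for the pair of coordinates that are close to each other. -/
lemma gapBox_factor (hR : 0 < R) (hr : 0 < r) (hy : y ∈ gapBox N (m + 1) R r)
    (hm : m + 1 < N) {a b : Fin N} (hab : a < b) :
    (2 * R ^ 2) * (if a = ⟨m, by omega⟩ ∧ b = ⟨m + 1, hm⟩ then r / (2 * R) else 1) ≤
      y b ^ 2 - y a ^ 2 := by
  have hmono := (gapBox_strictMono hR hr hy).monotone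
  have ha := gapBox_lower hR hr hy a
  have hb := gapBox_lower hR hr hy b
  have hab' : (a : ℕ) < b := hab
  have hb2 := b.2
  have main : ∀ d : ℝ, 0 ≤ d → d ≤ y b - y a → d * (2 * R) ≤ y b ^ 2 - y a ^ 2 := by
    intro d hd h
    calc d * (2 * R) ≤ (y b - y a) * (y b + y a) :=
          mul_le_mul h (by linarith) (by linarith) (by linarith)
      _ = _ := by ring
  split_ifs with h
  · have := main (r / 2) (by linarith) (by rw [h.1, h.2]; exact (gapBox_succ_eq hy hm).1.le)
    refine le_trans (le_of_eq ?_) this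
    field_simp
  · have hd : R ≤ y b - y a := by
      by_cases ham : (a : ℕ) = m
      · have hbm : (b : ℕ) ≠ m + 1 := fun hbm => h ⟨Fin.ext ham, Fin.ext hbm⟩
        have h3 : m + 1 + 1 < N := by omega
        have h4 := (gapBox_succ_ne hy (n := m + 1) (by omega) h3).1
        have h5 : y ⟨m + 1 + 1, h3⟩ ≤ y b := hmono (Fin.mk_le_of_le_val (by omega))
        have h6 : y a ≤ y ⟨m + 1, hm⟩ := hmono (Fin.le_def.2 (by simp only []; omega))
        linarith
      · have h3 : (a : ℕ) + 1 < N := by omega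
        have h4 := (gapBox_succ_ne hy ham h3).1
        have h5 : y ⟨(a : ℕ) + 1, h3⟩ ≤ y b := hmono (Fin.mk_le_of_le_val (by omega))
        simp only [Fin.eta] at h4
        linarith
    have := main R hR.le hd
    linarith

end

lemma exists_wB_lower_bound (N m : ℕ) (hm : m + 1 < N) (α R : ℝ) (hα : 0 < α) (hR : 0 < R) :
    ∃ C : ℝ, 0 < C ∧ ∀ r : ℝ, 0 < r → ∀ y ∈ gapBox N (m + 1) R r, C * r ≤ wB α y := by
  refine ⟨(∏ _l : Fin N, R ^ α) *
    ((∏ a : Fin N, ∏ _b ∈ Finset.Ioi a, (2 * R ^ 2)) * (2 * R)⁻¹), by positivity, ?_⟩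
  intro r hr y hy
  have hprod : (∏ a : Fin N, ∏ b ∈ Finset.Ioi a,
      (if a = ⟨m, by omega⟩ ∧ b = ⟨m + 1, hm⟩ then r / (2 * R) else 1)) = r / (2 * R) := by
    rw [Finset.prod_eq_single (⟨m, by omega⟩ : Fin N)]
    · rw [Finset.prod_eq_single (⟨m + 1, hm⟩ : Fin N)]
      · simp
      · intro b _ hb
        simp [hb]
      · intro hb
        exact absurd (Finset.mem_Ioi.2 (Fin.mk_lt_mk.2 (Nat.lt_succ_self m))) hb
    · intro a _ ha
      simp [ha]
    · simp
  have h1 : ∏ _l : Fin N, R ^ α ≤ ∏ l : Fin N, y l ^ α :=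
    Finset.prod_le_prod (fun _ _ => by positivity) fun l _ =>
      Real.rpow_le_rpow hR.le (gapBox_lower hR hr hy l).le hα.le
  have hnn : ∀ a b : Fin N, 0 ≤ (2 * R ^ 2) *
      (if a = ⟨m, by omega⟩ ∧ b = ⟨m + 1, hm⟩ then r / (2 * R) else 1) := by
    intro a b
    split_ifs <;> positivity
  have h2 : (∏ a : Fin N, ∏ _b ∈ Finset.Ioi a, (2 * R ^ 2)) * (r / (2 * R)) ≤
      ∏ a : Fin N, ∏ b ∈ Finset.Ioi a, (y b ^ 2 - y a ^ 2) := by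
    rw [← hprod]
    simp_rw [← Finset.prod_mul_distrib]
    exact Finset.prod_le_prod (fun a _ => Finset.prod_nonneg fun b _ => hnn a b) fun a _ =>
      Finset.prod_le_prod (fun b _ => hnn a b) fun b hb =>
        gapBox_factor hR hr hy hm (Finset.mem_Ioi.1 hb)
  calc _ = (∏ _l : Fin N, R ^ α) *
        ((∏ a : Fin N, ∏ _b ∈ Finset.Ioi a, (2 * R ^ 2)) * (r / (2 * R))) := by ring
    _ ≤ wB α y := mul_le_mul h1 h2 (by positivity)
        (le_trans (Finset.prod_nonneg fun _ _ => by positivity) h1)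

theorem stmt16 (N : ℕ) (hN : 2 ≤ N) (k α R : ℝ) (hk : 0 < k) (hα : 0 < α) (hR : 0 < R)
    (i : Fin N) (hi : (i : ℕ) + 1 < N) :
    ∃ c : ℝ, 0 < c ∧ ∀ r : ℝ, 0 < r → r < R →
      ENNReal.ofReal (c * r ^ (2 * k + 1)) ≤
        ∫⁻ y in {y : EuclideanSpace ℝ (Fin N) | (0 < y ⟨0, by omega⟩ ∧ StrictMono y) ∧
            R < y ⟨0, by omega⟩ ∧
            (0 < y ⟨(i : ℕ) + 1, hi⟩ - y i ∧ y ⟨(i : ℕ) + 1, hi⟩ - y i < r) ∧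
            ∀ j : Fin N, ∀ hj : (j : ℕ) + 1 < N, j ≠ i →
              R < y ⟨(j : ℕ) + 1, hj⟩ - y j},
          ENNReal.ofReal (Real.exp (-(‖y‖ + R) ^ 2 / 2) * wB α y ^ (2 * k)) := by
  obtain ⟨v, hv, hvol⟩ := exists_volume_gapBox N (i + 1) hi R hR
  obtain ⟨C, hC, hwB⟩ := exists_wB_lower_bound N i hi α R hα hR
  set M : ℝ := √(∑ _l : Fin N, (N * (2 * R)) ^ 2) with hM
  refine ⟨Real.exp (-(M + R) ^ 2 / 2) * C ^ (2 * k) * v, by positivity, fun r hr hrR => ?_⟩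
  have hsub : gapBox N (i + 1) R r ⊆
      {y : EuclideanSpace ℝ (Fin N) | (0 < y ⟨0, by omega⟩ ∧ StrictMono y) ∧
            R < y ⟨0, by omega⟩ ∧
            (0 < y ⟨(i : ℕ) + 1, hi⟩ - y i ∧ y ⟨(i : ℕ) + 1, hi⟩ - y i < r) ∧
            ∀ j : Fin N, ∀ hj : (j : ℕ) + 1 < N, j ≠ i →
              R < y ⟨(j : ℕ) + 1, hj⟩ - y j} := by
    intro y hy
    have h0 := (gapBox_zero hy (by omega)).1
    have h1 := gapBox_succ_eq hy hi
    exact ⟨⟨hR.trans h0, gapBox_strictMono hR hr hy⟩, h0, ⟨(half_pos hr).trans h1.1, h1.2⟩,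
      fun j hj hji => (gapBox_succ_ne hy (fun h => hji (Fin.ext h)) hj).1⟩
  refine le_trans ?_ (lintegral_mono_set hsub)
  calc ENNReal.ofReal (Real.exp (-(M + R) ^ 2 / 2) * C ^ (2 * k) * v * r ^ (2 * k + 1))
      = ENNReal.ofReal (Real.exp (-(M + R) ^ 2 / 2) * (C * r) ^ (2 * k)) *
          volume (gapBox N (i + 1) R r) := by
        rw [hvol r hr, ← ENNReal.ofReal_mul (by positivity), Real.mul_rpow hC.le hr.le,
          Real.rpow_add hr, Real.rpow_one]
        congr 1
        ring
    _ = ∫⁻ _y in gapBox N (i + 1) R r,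
          ENNReal.ofReal (Real.exp (-(M + R) ^ 2 / 2) * (C * r) ^ (2 * k)) := by
        rw [setLIntegral_const]
    _ ≤ _ := by
        refine setLIntegral_mono' (measurableSet_gapBox N _ R r) fun y hy => ?_
        have hn := norm_le_of_mem_gapBox hR hr hrR hy
        have hw := hwB r hr y hy
        have hn0 := norm_nonneg y
        gcongr
end
end
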